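/- Let S be a one-dimensional Cohen-Macaulay homogeneous graded ring over a field k with minimal multiplicity which is not Gorenstein, x a degree-one element with xn = n² for the graded maximal ideal n, and R = S/x²S. Then the residue field k = R/m has no right G(R)-approximation; in particular the subcategory G(R) of modules of G-dimension zero is not contravariantly finite in the category of finitely generated R-modules. -/

import Mathlib

open CategoryTheory

noncomputable abbrev ExtGrp (R : Type) [CommRing R] (M N : Type) [AddCommGroup M] [Module R M]
    [AddCommGroup N] [Module R N] (i : ℕ) : Type :=
  ((Ext R (ModuleCat R) i).obj (Opposite.op (ModuleCat.of R M))).obj (ModuleCat.of R N)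

/-- G-dimension zero. -/
def GDimZero (R : Type) [CommRing R] (M : Type) [AddCommGroup M] [Module R M] : Prop :=
  Function.Bijective (Module.Dual.eval R M) ∧
  (∀ i : ℕ, 0 < i → Subsingleton (ExtGrp R M R i)) ∧
  (∀ i : ℕ, 0 < i → Subsingleton (ExtGrp R (Module.Dual R M) R i))

/-- finite self-injective dimension -/
def HasFiniteSelfInjDim (R : Type) [CommRing R] : Prop :=
  ∃ n : ℕ, ∀ (N : ModuleCat R) (i : ℕ), n < i →
    Subsingleton (((Ext R (ModuleCat R) i).obj (Opposite.op N)).obj (ModuleCat.of R R))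

/-- Gorenstein local ring -/
def IsGorensteinLocalRing (R : Type) [CommRing R] : Prop :=
  IsNoetherianRing R ∧ IsLocalRing R ∧ HasFiniteSelfInjDim R

/-- length of a module, as Krull dimension of its submodule lattice -/
noncomputable def mlength (R : Type) [CommRing R] (M : Type) [AddCommGroup M] [Module R M] :
    WithBot ℕ∞ :=
  Order.krullDim (Submodule R M)

/-- A standard graded (homogeneous) algebra over a field: the degree-0 part is k,
the algebra is generated in degree 1, and all graded pieces are finite dimensional. -/
def IsStandardGraded (k S : Type) [Field k] [CommRing S] [Algebra k S]
    (𝒮 : ℕ → Submodule k S) [GradedAlgebra 𝒮] : Prop :=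
  𝒮 0 = (1 : Submodule k S) ∧ Algebra.adjoin k ((𝒮 1 : Set S)) = ⊤ ∧
    ∀ n, FiniteDimensional k ↥(𝒮 n)

/-- `GDimLE R n M` : the G-dimension of `M` over `R` is at most `n`,
i.e. an `n`-th syzygy of `M` has G-dimension zero. -/
def GDimLE (R : Type) [CommRing R] : ℕ → ∀ (M : Type) [AddCommGroup M] [Module R M], Prop
  | 0, M, _, _ => GDimZero R M
  | n + 1, M, _, _ => ∃ (b : ℕ) (π : (Fin b → R) →ₗ[R] M),
      Function.Surjective π ∧ GDimLE R n ↥(LinearMap.ker π)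

/-- `ProjDimLE S n M` : the projective dimension of `M` over `S` is at most `n`. -/
def ProjDimLE (S : Type) [CommRing S] : ℕ → ∀ (M : Type) [AddCommGroup M] [Module S M], Prop
  | 0, M, _, _ => Module.Projective S M
  | n + 1, M, _, _ => ∃ (b : ℕ) (π : (Fin b → S) →ₗ[S] M),
      Function.Surjective π ∧ ProjDimLE S n ↥(LinearMap.ker π)

theorem ext_iff_res (R : Type) [CommRing R] (M : ModuleCat.{0} R) (N : ModuleCat.{0} R)
    (P : ProjectiveResolution M) (i : ℕ) :
    Subsingleton (((Ext R (ModuleCat R) (i+1)).obj (Opposite.op M)).obj N) ↔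
    ∀ f : P.complex.X (i+1) ⟶ N, P.complex.d (i+2) (i+1) ≫ f = 0 →
      ∃ g : P.complex.X i ⟶ N, P.complex.d (i+1) i ≫ g = f := by
  have e := P.isoExt (R := R) (i+1) N
  have h1 : Subsingleton (((Ext R (ModuleCat R) (i+1)).obj (Opposite.op M)).obj N) ↔
      Limits.IsZero ((P.complex.linearYonedaObj R N).homology (i+1)) := by
    rw [← e.isZero_iff]
    exact (ModuleCat.isZero_iff_subsingleton).symm
  rw [h1, ← HomologicalComplex.exactAt_iff_isZero_homology,
    HomologicalComplex.exactAt_iff' _ i (i+1) (i+2) (by simp) (by simp),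
    ShortComplex.moduleCat_exact_iff]
  constructor
  · intro h f hf
    obtain ⟨g, hg⟩ := h f hf
    exact ⟨g, hg⟩
  · intro h f hf
    obtain ⟨g, hg⟩ := h f hf
    exact ⟨g, hg⟩

theorem exists_res (R : Type) [CommRing R] (M : Type) [AddCommGroup M] [Module R M]
    (X : ℕ → Type) [∀ i, AddCommGroup (X i)] [∀ i, Module R (X i)] [∀ i, Module.Projective R (X i)]
    (d : ∀ i, X (i+1) →ₗ[R] X i) (p : X 0 →ₗ[R] M)
    (hp : Function.Surjective p) (h0 : ∀ z, p z = 0 ↔ ∃ w, d 0 w = z)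
    (h1 : ∀ i z, d i z = 0 ↔ ∃ w, d (i+1) w = z) (N : Type) [AddCommGroup N] [Module R N] (i : ℕ) :
    Subsingleton (ExtGrp R M N (i+1)) ↔
    ∀ f : X (i+1) →ₗ[R] N, f ∘ₗ d (i+1) = 0 → ∃ g : X i →ₗ[R] N, g ∘ₗ d i = f := by
  let C : ChainComplex (ModuleCat.{0} R) ℕ := ChainComplex.of (fun i => ModuleCat.of R (X i))
    (fun i => ModuleCat.ofHom (d i)) (fun i => by
      ext z
      exact (h1 i _).2 ⟨z, rfl⟩)
  have hd : ∀ i, C.d (i+1) i = ModuleCat.ofHom (d i) := fun i => by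
    change ChainComplex.of.d (fun i => ModuleCat.of R (X i)) (fun i => ModuleCat.ofHom (d i)) (i+1) i = _
    rw [ChainComplex.of_d]
  have hz : C.d 1 0 ≫ ModuleCat.ofHom p = 0 := by
    rw [hd]; ext z
    exact (h0 _).2 ⟨z, rfl⟩
  have hex : ∀ n, C.ExactAt (n+1) := by
    intro n
    rw [HomologicalComplex.exactAt_iff' _ (n + 1 + 1) (n + 1) n (by simp) (by simp),
      ShortComplex.moduleCat_exact_iff]
    intro z hz
    have hz' : C.d (n+1) n z = 0 := hz
    rw [hd] at hz'
    obtain ⟨w, hw⟩ := (h1 n z).1 hz'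
    refine ⟨w, ?_⟩
    change C.d (n+1+1) (n+1) w = z
    rw [hd]
    exact hw
  let P : ProjectiveResolution (ModuleCat.of R M) :=
    { complex := C
      projective := fun n => (IsProjective.iff_projective (R := R) (X n)).1 inferInstance
      π := (ChainComplex.toSingle₀Equiv _ _).symm ⟨ModuleCat.ofHom p, hz⟩
      quasiIso := ⟨fun n => by
        cases n with
        | zero =>
          rw [ChainComplex.quasiIsoAt₀_iff, ShortComplex.quasiIso_iff_of_zeros']
          · constructor
            · rw [ShortComplex.moduleCat_exact_iff]
              intro z hz
              have hz' : p z = 0 := by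
                simp at hz
                exact hz
              obtain ⟨w, hw⟩ := (h0 z).1 hz'
              refine ⟨w, ?_⟩
              change C.d 1 0 w = z
              rw [hd]
              exact hw
            · rw [ModuleCat.epi_iff_surjective]
              intro y
              obtain ⟨w, hw⟩ := hp y
              refine ⟨w, ?_⟩
              simp
              exact hw
          all_goals rfl
        | succ n =>
          rw [quasiIsoAt_iff_exactAt']
          · exact hex n
          · apply ChainComplex.exactAt_succ_single_obj⟩ }
  have := ext_iff_res R (ModuleCat.of R M) (ModuleCat.of R N) P i
  refine this.trans ?_
  change (∀ f : ModuleCat.of R (X (i+1)) ⟶ ModuleCat.of R N, C.d (i+2) (i+1) ≫ f = 0 →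
    ∃ g : ModuleCat.of R (X i) ⟶ ModuleCat.of R N, C.d (i+1) i ≫ g = f) ↔ _
  rw [hd, hd]
  constructor
  · intro h f hf
    obtain ⟨g, hg⟩ := h (ModuleCat.ofHom f) (by rw [← ModuleCat.ofHom_comp, hf]; rfl)
    refine ⟨g.hom, ?_⟩
    have := congrArg ModuleCat.Hom.hom hg
    exact this
  · intro h f hf
    obtain ⟨g, hg⟩ := h f.hom (by have := congrArg ModuleCat.Hom.hom hf; exact this)
    refine ⟨ModuleCat.ofHom g, ?_⟩
    ext z
    exact LinearMap.congr_fun hg z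



theorem inj_of_div (A : Type) [CommRing A] [IsPrincipalIdealRing A] (M : Type)
    [AddCommGroup M] [Module A M] (h : ∀ a : A, a ≠ 0 → ∀ m : M, ∃ m', a • m' = m) :
    Module.Injective A M := by
  refine Module.Baer.injective ?_
  intro I g
  rcases IsPrincipalIdealRing.principal I with ⟨m, rfl⟩
  obtain rfl | h0 := eq_or_ne m 0
  · refine ⟨0, fun n hn ↦ ?_⟩
    rw [Submodule.span_zero_singleton] at hn
    have hn' : n = 0 := hn
    subst hn'
    exact (map_zero g).symm
  obtain ⟨q, hq⟩ := h m h0 (g ⟨m, Submodule.subset_span (Set.mem_singleton _)⟩)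
  refine ⟨LinearMap.toSpanSingleton A M q, fun n hn ↦ ?_⟩
  rcases Submodule.mem_span_singleton.mp hn with ⟨n, rfl⟩
  rw [LinearMap.toSpanSingleton_apply, smul_assoc, hq, ← map_smul g, SetLike.mk_smul_mk]

theorem proj_restrict (A S : Type) [CommRing A] [CommRing S] [Algebra A S] [Module.Free A S]
    (P : Type) [AddCommGroup P] [Module S P] [Module A P] [IsScalarTower A S P]
    [Module.Projective S P] : Module.Projective A P := by
  obtain ⟨s, hs⟩ := (Module.projective_def' (R := S) (P := P)).1 inferInstance
  have : Module.Projective A (P →₀ S) := inferInstance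
  refine Module.Projective.of_split (s.restrictScalars A)
    ((Finsupp.linearCombination S id).restrictScalars A) ?_
  ext p
  exact LinearMap.congr_fun hs p

/-- extension of A-linear maps along an exact sequence of modules, A a PID -/
theorem ext_pid (A : Type) [CommRing A] [IsDomain A] [IsPrincipalIdealRing A]
    (P0 P1 P2 : Type) [AddCommGroup P0] [AddCommGroup P1] [AddCommGroup P2]
    [Module A P0] [Module A P1] [Module A P2] [Module.Projective A P0]
    (d1 : P1 →ₗ[A] P0) (d2 : P2 →ₗ[A] P1) (h1 : ∀ z, d1 z = 0 → ∃ w, d2 w = z)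
    (h10 : ∀ w, d1 (d2 w) = 0)
    (f : P2 →ₗ[A] A) (hf : ∀ z, d2 z = 0 → f z = 0) :
    ∃ g : P1 →ₗ[A] A, ∀ z, g (d2 z) = f z := by
  let K := FractionRing A
  have hK : Module.Injective A K := inj_of_div A K (fun a ha m => by
    refine ⟨(algebraMap A K a)⁻¹ * m, ?_⟩
    rw [Algebra.smul_def, mul_inv_cancel_left₀]
    simpa using ha)
  let ι : A →ₗ[A] K := Algebra.linearMap A K
  have hι : Function.Injective ι := IsFractionRing.injective A K
  let Q := K ⧸ LinearMap.range ι
  have hQ : Module.Injective A Q := inj_of_div A Q (fun a ha m => by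
    obtain ⟨m, rfl⟩ := Submodule.mkQ_surjective _ m
    refine ⟨Submodule.mkQ _ ((algebraMap A K a)⁻¹ * m), ?_⟩
    rw [← map_smul, Algebra.smul_def, mul_inv_cancel_left₀]
    simpa using ha)
  -- general extension fact
  have key : ∀ (B C D : Type) [AddCommGroup B] [AddCommGroup C] [AddCommGroup D] [Module A B]
      [Module A C] [Module A D] (_ : Module.Injective A D) (d : B →ₗ[A] C) (φ : B →ₗ[A] D),
      (∀ z, d z = 0 → φ z = 0) → ∃ ψ : C →ₗ[A] D, ∀ z, ψ (d z) = φ z := by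
    intro B C D _ _ _ _ _ _ hD d φ h
    have hle : LinearMap.ker d ≤ LinearMap.ker φ := fun z hz => h z hz
    obtain ⟨ψ, hψ⟩ := hD.out ((LinearMap.ker d).liftQ d le_rfl)
      (by rw [← LinearMap.ker_eq_bot]; exact Submodule.ker_liftQ_eq_bot _ _ _ le_rfl)
      ((LinearMap.ker d).liftQ φ hle)
    refine ⟨ψ, fun z => ?_⟩
    have := hψ (Submodule.Quotient.mk z)
    simpa using this
  obtain ⟨g, hg⟩ := key P2 P1 K hK d2 (ι ∘ₗ f) (fun z hz => by simp [hf z hz])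
  obtain ⟨h, hh⟩ := key P1 P0 Q hQ d1 (Submodule.mkQ _ ∘ₗ g) (fun z hz => by
    obtain ⟨w, rfl⟩ := h1 z hz
    simp only [LinearMap.comp_apply, hg]
    exact (Submodule.Quotient.mk_eq_zero _).2 ⟨_, rfl⟩)
  obtain ⟨h', hh'⟩ := Module.projective_lifting_property (Submodule.mkQ (LinearMap.range ι)) h
    (Submodule.mkQ_surjective _)
  have hmem : ∀ z, (g - h' ∘ₗ d1) z ∈ LinearMap.range ι := by
    intro z
    rw [← Submodule.Quotient.mk_eq_zero, LinearMap.sub_apply, Submodule.Quotient.mk_sub, sub_eq_zero]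
    have e1 := hh z
    have e2 := LinearMap.congr_fun hh' (d1 z)
    simp only [LinearMap.comp_apply] at e1 e2
    exact e1.symm.trans e2.symm
  let e := LinearEquiv.ofInjective ι hι
  refine ⟨e.symm.toLinearMap ∘ₗ (g - h' ∘ₗ d1).codRestrict _ hmem, fun z => ?_⟩
  simp only [LinearMap.comp_apply, LinearEquiv.coe_coe]
  rw [LinearEquiv.symm_apply_eq]
  apply Subtype.ext
  simp [h10, hg, e]

theorem selfinj_of_frob (A S : Type) [CommRing A] [IsDomain A] [IsPrincipalIdealRing A]
    [CommRing S] [Algebra A S] [Module.Free A S] (tr : S →ₗ[A] A)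
    (hinj : ∀ t, (∀ s, tr (s * t) = 0) → t = 0)
    (hsurj : ∀ (P : Type) [AddCommGroup P] [Module S P] [Module A P] [IsScalarTower A S P]
      (g : P →ₗ[A] A), ∃ f : P →ₗ[S] S, ∀ p, tr (f p) = g p) : HasFiniteSelfInjDim S := by
  refine ⟨1, fun N i hi => ?_⟩
  obtain ⟨j, rfl⟩ : ∃ j, i = j + 1 + 1 := ⟨i - 2, by omega⟩
  let P := ProjectiveResolution.of N
  rw [ext_iff_res S N _ P]
  intro f hf
  let _ : ∀ i, Module A (P.complex.X i) := fun i => Module.compHom _ (algebraMap A S)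
  have : ∀ i, IsScalarTower A S (P.complex.X i) := fun i => 
    ⟨fun a s p => by
      change (a • s) • p = algebraMap A S a • (s • p)
      rw [Algebra.smul_def, mul_smul]⟩
  have : ∀ i, Module.Projective S (P.complex.X i) := fun i => 
    (IsProjective.iff_projective (R := S) (P.complex.X i)).2 (P.projective i)
  have : ∀ i, Module.Projective A (P.complex.X i) := fun i => proj_restrict A S _
  have hex := fun n => (ShortComplex.moduleCat_exact_iff _).1 (P.exact_succ n)
  obtain ⟨g, hg⟩ := ext_pid A (P.complex.X j) (P.complex.X (j+1)) (P.complex.X (j+1+1))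
    ((P.complex.d (j+1) j).hom.restrictScalars A)
    ((P.complex.d (j+1+1) (j+1)).hom.restrictScalars A)
    (fun z hz => hex j z hz)
    (fun w => by
      have := congrArg (fun q => q.hom w) (P.complex.d_comp_d (j+1+1) (j+1) j)
      exact this)
    (tr ∘ₗ f.hom.restrictScalars A)
    (fun z hz => by
      obtain ⟨w, rfl⟩ := hex (j+1) z hz
      have h2 : f.hom ((P.complex.d (j+1+2) (j+1+1)).hom w) = 0 := 
        congrArg (fun q => q.hom w) hf
      change tr (f.hom ((P.complex.d (j+1+2) (j+1+1)).hom w)) = 0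
      rw [h2, map_zero])
  obtain ⟨F, hF⟩ := hsurj _ g
  refine ⟨ModuleCat.ofHom F, ?_⟩
  ext p
  change F ((P.complex.d (j+1+1) (j+1)).hom p) = f.hom p
  rw [← sub_eq_zero]
  apply hinj
  intro s
  have h3 := hg (s • p)
  rw [← hF] at h3
  simp only [LinearMap.coe_restrictScalars, map_smul, LinearMap.comp_apply, smul_eq_mul] at h3
  rw [mul_sub, map_sub, h3, sub_self]


theorem selfinj_poly (k S : Type) [Field k] [CommRing S] [Algebra k S] (x : S)
    (hb : Function.Bijective (Polynomial.aeval (R := k) x)) : HasFiniteSelfInjDim S := by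
  let A := Polynomial k
  let φ : A →+* S := (Polynomial.aeval (R := k) x).toRingHom
  let _ : Algebra A S := φ.toAlgebra
  let e : A ≃ₗ[A] S := LinearEquiv.ofBijective (Algebra.linearMap A S) hb
  have : Module.Free A S := Module.Free.of_equiv e
  refine selfinj_of_frob A S e.symm.toLinearMap ?_ ?_
  · intro t h
    have := h 1
    simpa using this
  · intro P _ _ _ _ g
    refine ⟨{ toFun := fun p => e (g p), map_add' := by simp, map_smul' := ?_ }, fun p => e.symm_apply_apply (g p)⟩
    intro s p
    obtain ⟨a, rfl⟩ := e.surjective s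
    have : e a = algebraMap A S a := rfl
    rw [this, algebraMap_smul, map_smul, map_smul, RingHom.id_apply, Algebra.smul_def, smul_eq_mul]

theorem selfinj_two (k S : Type) [Field k] [CommRing S] [Algebra k S] (x y : S)
    (hs : ∀ s : S, ∃ p q : Polynomial k, Polynomial.aeval x p + Polynomial.aeval x q * y = s)
    (hi : ∀ p q : Polynomial k, Polynomial.aeval x p + Polynomial.aeval x q * y = 0 → p = 0 ∧ q = 0) :
    HasFiniteSelfInjDim S := by
  let A := Polynomial k
  let φ : A →+* S := (Polynomial.aeval (R := k) x).toRingHom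
  let _ : Algebra A S := φ.toAlgebra
  let l : (A × A) →ₗ[A] S :=
    (Algebra.linearMap A S).coprod (LinearMap.toSpanSingleton A S y)
  have hl : ∀ p q, l (p, q) = Polynomial.aeval x p + Polynomial.aeval x q * y := by
    intro p q
    simp only [l, LinearMap.coprod_apply, LinearMap.toSpanSingleton_apply, Algebra.smul_def]
    rfl
  have hlb : Function.Bijective l := by
    constructor
    · rw [← LinearMap.ker_eq_bot, LinearMap.ker_eq_bot']
      rintro ⟨p, q⟩ h
      rw [hl] at h
      obtain ⟨rfl, rfl⟩ := hi p q h
      rfl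
    · intro s
      obtain ⟨p, q, h⟩ := hs s
      exact ⟨(p, q), by rw [hl, h]⟩
  let e : (A × A) ≃ₗ[A] S := LinearEquiv.ofBijective l hlb
  have he : ∀ p q : A, e (p, q) = p • (1 : S) + q • y := by
    intro p q
    simp [e, l, Algebra.smul_def]
  have : Module.Free A S := Module.Free.of_equiv e
  obtain ⟨⟨α, β⟩, hαβ⟩ := e.surjective (y * y)
  rw [he] at hαβ
  have hes : ∀ p q : A, e.symm (p • (1 : S) + q • y) = (p, q) := fun p q => by
    rw [← he, LinearEquiv.symm_apply_apply]
  refine selfinj_of_frob A S (LinearMap.snd A A A ∘ₗ e.symm.toLinearMap) ?_ ?_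
  · intro t h
    obtain ⟨⟨p, q⟩, rfl⟩ := e.surjective t
    have h1 := h 1
    have h2 := h y
    simp only [one_mul, LinearMap.comp_apply, LinearEquiv.coe_coe, LinearEquiv.symm_apply_apply,
      LinearMap.snd_apply] at h1
    subst h1
    have h3 : y * e (p, 0) = (0 : A) • (1 : S) + p • y := by
      rw [he]; simp
    rw [h3, LinearMap.comp_apply, LinearEquiv.coe_coe, hes] at h2
    have h2' : p = 0 := h2
    subst h2'
    exact map_zero e
  · intro P _ _ _ _ g
    let F : P →ₗ[A] S :=
      { toFun := fun p => (g (y • p) - β • g p) • (1 : S) + g p • y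
        map_add' := fun a b => by
          simp only [smul_add, map_add, Algebra.smul_def]
          simp only [map_sub, map_add, map_mul]; ring
        map_smul' := fun a b => by
          rw [smul_comm y a b]
          simp only [map_smul, Algebra.smul_def]
          simp only [map_sub, map_mul, Algebra.algebraMap_self, RingHom.id_apply]; ring }
    have hFy : ∀ p, F (y • p) = y * F p := by
      intro p
      have h1 : y • y • p = α • p + β • y • p := by
        rw [← mul_smul, ← hαβ, add_smul, smul_assoc, smul_assoc, one_smul]
      change (g (y • y • p) - β • g (y • p)) • (1 : S) + g (y • p) • y =
        y * ((g (y • p) - β • g p) • (1 : S) + g p • y)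
      rw [h1]
      have h2 : y * y = algebraMap A S α + algebraMap A S β * y := by
        rw [← hαβ]; simp [Algebra.smul_def]
      simp only [map_add, map_smul, Algebra.smul_def]
      simp only [map_sub, map_mul, map_add]
      linear_combination - algebraMap A S (g p) * h2
    refine ⟨{ toFun := F, map_add' := F.map_add, map_smul' := ?_ }, fun p => ?_⟩
    · intro s p
      obtain ⟨⟨a, b⟩, rfl⟩ := e.surjective s
      rw [he, RingHom.id_apply, add_smul, smul_assoc, smul_assoc, one_smul, map_add, map_smul,
        map_smul, hFy, smul_eq_mul, add_mul, smul_mul_assoc, smul_mul_assoc, one_mul]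
    · change (e.symm ((g (y • p) - β • g p) • (1 : S) + g p • y)).2 = g p
      rw [hes]


structure MinMult (k S : Type) [Field k] [CommRing S] [Algebra k S] (n : Ideal S) (x : S) : Prop where
  H1 : ∀ s : S, ∃ c : k, s - algebraMap k S c ∈ n
  H2 : ∀ c : k, algebraMap k S c ∈ n → c = 0
  xn : x ∈ n
  nzd : ∀ s, x * s = 0 → s = 0
  sq : ∀ v ∈ n, ∀ w ∈ n, ∃ t ∈ n, v * w = x * t
  gen : ∃ d : ℕ, ∃ v : Fin d → S, (∀ i, v i ∈ n) ∧
    ∀ s ∈ n, ∃ c : Fin d → k, ∃ t ∈ n, s = ∑ i, c i • v i + x * t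
  two : ∃ y1 ∈ n, ∃ y2 ∈ n, ∀ a b : k, ∀ t, a • y1 + b • y2 = x * t → a = 0 ∧ b = 0

theorem coeff_zero_aux (k S : Type) [Field k] [CommRing S] [Algebra k S] (n : Ideal S) (x y : S)
    (H2 : ∀ c : k, algebraMap k S c ∈ n → c = 0) (xn : x ∈ n) (yn : y ∈ n)
    (nzd : ∀ s, x * s = 0 → s = 0) (j : ℕ) : ∀ p q : Polynomial k,
    (q = 0 ∨ ∀ b : k, ∀ t, b • y = x * t → b = 0) →
    Polynomial.aeval x p + Polynomial.aeval x q * y = 0 → p.coeff j = 0 ∧ q.coeff j = 0 := by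
  have key : ∀ p q : Polynomial k,
    (q = 0 ∨ ∀ b : k, ∀ t, b • y = x * t → b = 0) →
    Polynomial.aeval x p + Polynomial.aeval x q * y = 0 →
    p.coeff 0 = 0 ∧ q.coeff 0 = 0 ∧
     Polynomial.aeval x p.divX + Polynomial.aeval x q.divX * y = 0 := by
    intro p q hq h
    have hp' : Polynomial.aeval x p = x * Polynomial.aeval x p.divX + algebraMap k S (p.coeff 0) := by
      have e := congrArg (Polynomial.aeval x) (Polynomial.X_mul_divX_add p)
      rw [map_add, map_mul, Polynomial.aeval_X, Polynomial.aeval_C] at e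
      exact e.symm
    have hq' : Polynomial.aeval x q = x * Polynomial.aeval x q.divX + algebraMap k S (q.coeff 0) := by
      have e := congrArg (Polynomial.aeval x) (Polynomial.X_mul_divX_add q)
      rw [map_add, map_mul, Polynomial.aeval_X, Polynomial.aeval_C] at e
      exact e.symm
    have h0 : p.coeff 0 = 0 := by
      apply H2
      have : algebraMap k S (p.coeff 0) = -(x * Polynomial.aeval x p.divX) 
        - Polynomial.aeval x q * y := by linear_combination h - hp'
      rw [this]
      exact n.sub_mem (n.neg_mem (n.mul_mem_right _ xn)) (n.mul_mem_left _ yn)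
    rw [h0, map_zero, add_zero] at hp'
    have h1 : q.coeff 0 = 0 := by
      rcases hq with rfl | hq
      · simp
      · apply hq _ (-(Polynomial.aeval x p.divX + Polynomial.aeval x q.divX * y))
        rw [Algebra.smul_def]
        linear_combination h - hp' - y * hq'
    rw [h1, map_zero, add_zero] at hq'
    refine ⟨h0, h1, nzd _ ?_⟩
    linear_combination h - hp' - y * hq'
  induction j with
  | zero => intro p q hq h; exact ⟨(key p q hq h).1, (key p q hq h).2.1⟩
  | succ j ih =>
    intro p q hq h
    have := ih p.divX q.divX (hq.imp (fun h => by simp [h]) id) (key p q hq h).2.2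
    simpa [Polynomial.coeff_divX] using this

theorem minMult_of (k S : Type) [Field k] [CommRing S] [Algebra k S]
    (𝒮 : ℕ → Submodule k S) [GradedAlgebra 𝒮] (hSG : IsStandardGraded k S 𝒮)
    (hdim : ringKrullDim S = 1)
    (hng : ¬ HasFiniteSelfInjDim S)
    (x : S) (hx1 : x ∈ 𝒮 1) (hxnzd : x ∈ nonZeroDivisors S)
    (hMM : Ideal.span {x} * (HomogeneousIdeal.irrelevant 𝒮).toIdeal =
      (HomogeneousIdeal.irrelevant 𝒮).toIdeal ^ 2) :
    MinMult k S (HomogeneousIdeal.irrelevant 𝒮).toIdeal x := by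
  obtain ⟨h0, hgen, hfd⟩ := hSG
  set n := (HomogeneousIdeal.irrelevant 𝒮).toIdeal with hn
  have hnt : Nontrivial S := by
    by_contra h
    rw [not_nontrivial_iff_subsingleton] at h
    rw [ringKrullDim_eq_bot_of_subsingleton] at hdim
    exact absurd hdim (by simp)
  have hmem : ∀ a, a ∈ n ↔ (DirectSum.decompose 𝒮 a 0 : S) = 0 := by
    intro a
    exact HomogeneousIdeal.mem_irrelevant_iff 𝒮 a
  have hpos : ∀ d, ∀ a ∈ 𝒮 (d+1), a ∈ n := by
    intro d a ha
    rw [hmem, DirectSum.decompose_of_mem_ne 𝒮 ha (by omega)]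
  have H2 : ∀ c : k, algebraMap k S c ∈ n → c = 0 := by
    intro c hc
    rw [hmem, DirectSum.decompose_of_mem_same 𝒮 (SetLike.algebraMap_mem_graded 𝒮 c)] at hc
    simpa using hc
  have xn : x ∈ n := hpos 0 x hx1
  have nzd : ∀ s, x * s = 0 → s = 0 := fun s hs => by
    exact (mul_right_mem_nonZeroDivisors_eq_zero_iff hxnzd).1 (by rwa [mul_comm] at hs)
  have hsq' : ∀ s ∈ n ^ 2, ∃ t ∈ n, s = x * t := by
    intro s hs
    rw [← hMM, Ideal.mem_span_singleton_mul] at hs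
    obtain ⟨t, ht, rfl⟩ := hs
    exact ⟨t, ht, rfl⟩
  have sq : ∀ v ∈ n, ∀ w ∈ n, ∃ t ∈ n, v * w = x * t := by
    intro v hv w hw
    exact hsq' _ (by rw [pow_two]; exact Ideal.mul_mem_mul hv hw)
  have hdec : ∀ s : S, ∃ c : k, ∃ v ∈ 𝒮 1, ∃ t ∈ n, s = algebraMap k S c + v + x * t := by
    intro s
    have hs : s ∈ Algebra.adjoin k ((𝒮 1 : Set S)) := by rw [hgen]; trivial
    induction hs using Algebra.adjoin_induction with
    | mem v hv => exact ⟨0, v, hv, 0, n.zero_mem, by simp⟩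
    | algebraMap c => exact ⟨c, 0, Submodule.zero_mem _, 0, n.zero_mem, by simp⟩
    | add a b _ _ ha hb =>
      obtain ⟨c, v, hv, t, ht, rfl⟩ := ha
      obtain ⟨c', v', hv', t', ht', rfl⟩ := hb
      exact ⟨c + c', v + v', Submodule.add_mem _ hv hv', t + t', n.add_mem ht ht', by
        rw [map_add]; ring⟩
    | mul a b _ _ ha hb =>
      obtain ⟨c, v, hv, t, ht, rfl⟩ := ha
      obtain ⟨c', v', hv', t', ht', rfl⟩ := hb
      obtain ⟨w, hw, hw'⟩ := sq v (hpos 0 v hv) v' (hpos 0 v' hv')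
      refine ⟨c * c', c • v' + c' • v, Submodule.add_mem _ (Submodule.smul_mem _ _ hv')
        (Submodule.smul_mem _ _ hv), w + t * (algebraMap k S c' + v' + x * t') +
        t' * (algebraMap k S c + v), ?_, ?_⟩
      · exact n.add_mem (n.add_mem hw (n.mul_mem_right _ ht)) (n.mul_mem_right _ ht')
      · rw [map_mul, Algebra.smul_def, Algebra.smul_def]
        linear_combination hw'
  have H1 : ∀ s : S, ∃ c : k, s - algebraMap k S c ∈ n := by
    intro s
    obtain ⟨c, v, hv, t, ht, rfl⟩ := hdec s
    refine ⟨c, ?_⟩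
    have : algebraMap k S c + v + x * t - algebraMap k S c = v + x * t := by ring
    rw [this]
    exact n.add_mem (hpos 0 v hv) (n.mul_mem_left _ ht)
  have hdec' : ∀ s ∈ n, ∃ v ∈ 𝒮 1, ∃ t ∈ n, s = v + x * t := by
    intro s hs
    obtain ⟨c, v, hv, t, ht, rfl⟩ := hdec s
    have : c = 0 := H2 c (by
      have : algebraMap k S c = (algebraMap k S c + v + x * t) - (v + x * t) := by ring
      rw [this]
      exact n.sub_mem hs (n.add_mem (hpos 0 v hv) (n.mul_mem_left _ ht)))
    exact ⟨v, hv, t, ht, by simp [this]⟩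
  have gen : ∃ d : ℕ, ∃ v : Fin d → S, (∀ i, v i ∈ n) ∧
    ∀ s ∈ n, ∃ c : Fin d → k, ∃ t ∈ n, s = ∑ i, c i • v i + x * t := by
    have := hfd 1
    let b := Module.finBasis k (𝒮 1)
    refine ⟨_, fun i => (b i : S), fun i => hpos 0 _ (b i).2, fun s hs => ?_⟩
    obtain ⟨v, hv, t, ht, rfl⟩ := hdec' s hs
    refine ⟨fun i => b.repr ⟨v, hv⟩ i, t, ht, ?_⟩
    have := congrArg Subtype.val (b.sum_repr ⟨v, hv⟩)
    simp only [AddSubmonoidClass.coe_finsetSum, Submodule.coe_smul] at this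
    rw [this]
  refine ⟨H1, H2, xn, nzd, sq, gen, ?_⟩
  by_contra hcon
  apply hng
  -- surjectivity
  have hsur : ∀ y ∈ 𝒮 1, (∀ z ∈ n, ∃ a : k, ∃ t, z = a • y + x * t) →
      ∀ s : S, ∃ p q : Polynomial k, Polynomial.aeval x p + Polynomial.aeval x q * y = s := by
    intro y hy hz
    have hd : ∀ d, ∀ s ∈ 𝒮 d, ∃ p q : Polynomial k,
        Polynomial.aeval x p + Polynomial.aeval x q * y = s := by
      intro d
      induction d with
      | zero =>
        intro s hs
        rw [h0, Submodule.mem_one] at hs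
        obtain ⟨c, rfl⟩ := hs
        exact ⟨Polynomial.C c, 0, by simp⟩
      | succ d ih =>
        intro s hs
        obtain ⟨a, t, hat⟩ := hz s (hpos d s hs)
        have h1 : (DirectSum.decompose 𝒮 s (d+1) : S) = 
          a • (DirectSum.decompose 𝒮 y (d+1) : S) + x * (DirectSum.decompose 𝒮 t d : S) := by
          rw [hat, DirectSum.decompose_add, DirectSum.decompose_smul]
          have := DirectSum.coe_decompose_mul_add_of_left_mem 𝒮 (j := d) (b := t) hx1
          rw [add_comm 1 d] at this
          rw [DirectSum.add_apply, Submodule.coe_add, this]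
          rfl
        rw [DirectSum.decompose_of_mem_same 𝒮 hs] at h1
        obtain ⟨p, q, hpq⟩ := ih (DirectSum.decompose 𝒮 t d : S) (DirectSum.decompose 𝒮 t d).2
        rcases Nat.eq_zero_or_pos d with rfl | hdpos
        · rw [DirectSum.decompose_of_mem_same 𝒮 hy] at h1
          refine ⟨Polynomial.X * p, Polynomial.X * q + Polynomial.C a, ?_⟩
          rw [h1, ← hpq, Algebra.smul_def]
          simp
          ring
        · rw [DirectSum.decompose_of_mem_ne 𝒮 hy (by omega)] at h1
          refine ⟨Polynomial.X * p, Polynomial.X * q, ?_⟩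
          rw [h1, ← hpq]
          simp
          ring
    intro s
    induction s using DirectSum.Decomposition.inductionOn 𝒮 with
    | zero => exact ⟨0, 0, by simp⟩
    | homogeneous m => exact hd _ _ m.2
    | add a b ha hb =>
      obtain ⟨p, q, rfl⟩ := ha
      obtain ⟨p', q', rfl⟩ := hb
      exact ⟨p + p', q + q', by simp; ring⟩
  by_cases hc : ∀ z ∈ n, ∃ t, z = x * t
  · refine selfinj_poly k S x ⟨?_, ?_⟩
    · rw [injective_iff_map_eq_zero]
      intro p hp
      ext j
      exact (coeff_zero_aux k S n x 0 H2 xn n.zero_mem nzd j p 0 (Or.inl rfl) (by simpa using hp)).1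
    · intro s
      obtain ⟨p, q, h⟩ := hsur 0 (Submodule.zero_mem _) (fun z hz => by
        obtain ⟨t, ht⟩ := hc z hz
        exact ⟨0, t, by simp [ht]⟩) s
      exact ⟨p, by simpa using h⟩
  · push Not at hc
    obtain ⟨z, hz, hzx⟩ := hc
    obtain ⟨y, hy, t0, ht0, rfl⟩ := hdec' z hz
    have hind : ∀ b : k, ∀ t, b • y = x * t → b = 0 := by
      intro b t hb
      by_contra hb0
      apply hzx (b⁻¹ • t + t0)
      have : y = x * (b⁻¹ • t) := by
        rw [mul_smul_comm, ← hb, smul_smul, inv_mul_cancel₀ hb0, one_smul]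
      rw [mul_add, ← this]
    have hyn := hpos 0 y hy
    refine selfinj_two k S x y (hsur y hy ?_) ?_
    · intro z hz
      by_contra hz'
      push Not at hz'
      apply hcon
      refine ⟨y, hyn, z, hz, ?_⟩
      intro a b t hab
      have hb : b = 0 := by
        by_contra hb0
        apply hz' (-(b⁻¹ * a)) (b⁻¹ • t)
        rw [mul_smul_comm, ← hab, smul_add, smul_smul, smul_smul, inv_mul_cancel₀ hb0, one_smul,
          neg_smul]
        abel
      subst hb
      rw [zero_smul, add_zero] at hab
      exact ⟨hind a t hab, rfl⟩
    · intro p q h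
      constructor
      · ext j; exact (coeff_zero_aux k S n x y H2 xn hyn nzd j p q (Or.inr hind) h).1
      · ext j; exact (coeff_zero_aux k S n x y H2 xn hyn nzd j p q (Or.inr hind) h).2



theorem fun_eq_dot {R : Type} [CommRing R] {ι : Type} [Fintype ι] [DecidableEq ι]
    (f : (ι → R) →ₗ[R] R) : ∃ c : ι → R, ∀ z, f z = c ⬝ᵥ z := by
  refine ⟨fun j => f (Pi.single j 1), fun z => ?_⟩
  rw [LinearMap.pi_apply_eq_sum_univ f z, dotProduct]
  refine Finset.sum_congr rfl fun j _ => ?_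
  rw [smul_eq_mul, mul_comm]
  congr 2
  ext l
  simp [Pi.single_apply, eq_comm]

structure MF (R : Type) [CommRing R] {ι : Type} [Fintype ι] [DecidableEq ι]
    (A B : Matrix ι ι R) : Prop where
  h1 : ∀ z, A.mulVec z = 0 ↔ ∃ w, B.mulVec w = z
  h2 : ∀ z, B.mulVec z = 0 ↔ ∃ w, A.mulVec w = z
  h3 : ∀ z, A.transpose.mulVec z = 0 ↔ ∃ w, B.transpose.mulVec w = z
  h4 : ∀ z, B.transpose.mulVec z = 0 ↔ ∃ w, A.transpose.mulVec w = z

theorem mf_ext {R : Type} [CommRing R] {ι : Type} [Fintype ι] [DecidableEq ι]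
    {A B : Matrix ι ι R} (h : MF R A B) (M : Type) [AddCommGroup M] [Module R M]
    (p : (ι → R) →ₗ[R] M) (hp : Function.Surjective p)
    (hk : ∀ z, p z = 0 ↔ ∃ w, A.mulVec w = z) (i : ℕ) : Subsingleton (ExtGrp R M R (i+1)) := by
  rw [exists_res R M (fun _ => ι → R) (fun i => if Even i then A.mulVecLin else B.mulVecLin) p hp
    (fun z => by simpa using hk z) ?_ R i]
  · intro f hf
    obtain ⟨c, hc⟩ := fun_eq_dot f
    by_cases hi : Even i
    · have hi' : ¬ Even (i+1) := by rw [Nat.even_add_one]; simpa using hi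
      rw [if_neg hi'] at hf
      have h0 : B.transpose.mulVec c = 0 := by
        ext j
        have := LinearMap.congr_fun hf (Pi.single j 1)
        simp only [LinearMap.comp_apply, Matrix.mulVecLin_apply, hc, Matrix.dotProduct_mulVec,
          dotProduct_single, mul_one, LinearMap.zero_apply] at this
        rw [Matrix.mulVec_transpose]
        exact this
      obtain ⟨w, hw⟩ := (h.h4 c).1 h0
      refine ⟨(dotProductBilin R R w), ?_⟩
      rw [if_pos hi]
      refine LinearMap.ext fun z => ?_
      rw [hc, ← hw]
      simp [Matrix.mulVec_transpose, Matrix.dotProduct_mulVec]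
    · have hi' : Even (i+1) := by rw [Nat.even_add_one]; simpa using hi
      rw [if_pos hi'] at hf
      have h0 : A.transpose.mulVec c = 0 := by
        ext j
        have := LinearMap.congr_fun hf (Pi.single j 1)
        simp only [LinearMap.comp_apply, Matrix.mulVecLin_apply, hc, Matrix.dotProduct_mulVec,
          dotProduct_single, mul_one, LinearMap.zero_apply] at this
        rw [Matrix.mulVec_transpose]
        exact this
      obtain ⟨w, hw⟩ := (h.h3 c).1 h0
      refine ⟨(dotProductBilin R R w), ?_⟩
      rw [if_neg hi]
      refine LinearMap.ext fun z => ?_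
      rw [hc, ← hw]
      simp [Matrix.mulVec_transpose, Matrix.dotProduct_mulVec]
  · intro i z
    by_cases hi : Even i
    · have hi' : ¬ Even (i+1) := by rw [Nat.even_add_one]; simpa using hi
      simp only [if_pos hi, if_neg hi']
      exact h.h1 z
    · have hi' : Even (i+1) := by rw [Nat.even_add_one]; simpa using hi
      simp only [if_neg hi, if_pos hi']
      exact h.h2 z

theorem mf_gdim {R : Type} [CommRing R] {ι : Type} [Fintype ι] [DecidableEq ι]
    {A B : Matrix ι ι R} (h : MF R A B) : GDimZero R ((ι → R) ⧸ LinearMap.range A.mulVecLin) := by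
  set T := (ι → R) ⧸ LinearMap.range A.mulVecLin
  have hBA : ∀ z, B.mulVec (A.mulVec z) = 0 := fun z => (h.h2 _).2 ⟨z, rfl⟩
  let q : (ι → R) →ₗ[R] T := (LinearMap.range A.mulVecLin).mkQ
  have hq : Function.Surjective q := Submodule.mkQ_surjective _
  have hqk : ∀ z, q z = 0 ↔ ∃ w, A.mulVec w = z := fun z => by
    rw [Submodule.mkQ_apply, Submodule.Quotient.mk_eq_zero]
    exact LinearMap.mem_range
  let p : (ι → R) →ₗ[R] Module.Dual R T :=
    { toFun := fun z => Submodule.liftQ _ ((dotProductBilin R R (B.transpose.mulVec z))) (by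
        rintro _ ⟨y, rfl⟩
        simp [Matrix.mulVec_transpose, ← Matrix.dotProduct_mulVec, hBA])
      map_add' := fun a b => by
        apply Submodule.linearMap_qext
        refine LinearMap.ext fun y => ?_
        simp [Matrix.mulVec_add]
      map_smul' := fun r b => by
        apply Submodule.linearMap_qext
        refine LinearMap.ext fun y => ?_
        simp [Matrix.mulVec_smul] }
  have hpq : ∀ z y, p z (q y) = z ⬝ᵥ B.mulVec y := fun z y => by
    rw [Matrix.dotProduct_mulVec, ← Matrix.mulVec_transpose]
    rfl
  have hps : Function.Surjective p := by
    intro φ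
    obtain ⟨c, hc⟩ := fun_eq_dot (φ ∘ₗ q)
    have h0 : A.transpose.mulVec c = 0 := by
      ext j
      have := hc (A.mulVec (Pi.single j 1))
      rw [LinearMap.comp_apply, (hqk _).2 ⟨_, rfl⟩, map_zero, Matrix.dotProduct_mulVec,
        dotProduct_single, mul_one] at this
      rw [Matrix.mulVec_transpose]
      exact this.symm
    obtain ⟨w, hw⟩ := (h.h3 c).1 h0
    refine ⟨w, ?_⟩
    refine LinearMap.ext fun t => ?_
    obtain ⟨y, rfl⟩ := hq t
    rw [hpq, Matrix.dotProduct_mulVec, ← Matrix.mulVec_transpose, hw]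
    exact (hc y).symm
  have hpk : ∀ z, p z = 0 ↔ ∃ w, A.transpose.mulVec w = z := by
    intro z
    rw [← h.h4]
    constructor
    · intro hz
      ext j
      have := hpq z (Pi.single j 1)
      rw [hz, Matrix.dotProduct_mulVec, dotProduct_single, mul_one] at this
      rw [Matrix.mulVec_transpose]
      exact this.symm
    · intro hz
      refine LinearMap.ext fun t => ?_
      obtain ⟨y, rfl⟩ := hq t
      rw [hpq, Matrix.dotProduct_mulVec, ← Matrix.mulVec_transpose, hz]
      simp
  have hT : MF R A.transpose B.transpose := ⟨h.h3, h.h4, by simpa using h.h1, by simpa using h.h2⟩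
  refine ⟨⟨?_, ?_⟩, ?_, ?_⟩
  · rw [injective_iff_map_eq_zero]
    intro t ht
    obtain ⟨y, rfl⟩ := hq t
    rw [hqk, ← h.h2]
    ext j
    have := LinearMap.congr_fun ht (p (Pi.single j 1))
    rw [Module.Dual.eval_apply, hpq, single_dotProduct, one_mul] at this
    exact this
  · intro Θ
    obtain ⟨θ, hθ⟩ := fun_eq_dot (Θ ∘ₗ p)
    have h0 : A.mulVec θ = 0 := by
      ext j
      have := hθ (A.transpose.mulVec (Pi.single j 1))
      rw [LinearMap.comp_apply, (hpk _).2 ⟨_, rfl⟩, map_zero, Matrix.dotProduct_mulVec,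
        dotProduct_single, mul_one, Matrix.vecMul_transpose] at this
      exact this.symm
    obtain ⟨y, hy⟩ := (h.h1 θ).1 h0
    refine ⟨q y, ?_⟩
    refine LinearMap.ext fun φ => ?_
    obtain ⟨z, rfl⟩ := hps φ
    rw [Module.Dual.eval_apply, hpq, hy, dotProduct_comm]
    exact (hθ z).symm
  · intro i hi
    obtain ⟨i, rfl⟩ := Nat.exists_eq_succ_of_ne_zero hi.ne'
    exact mf_ext h T q hq hqk i
  · intro i hi
    obtain ⟨i, rfl⟩ := Nat.exists_eq_succ_of_ne_zero hi.ne'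
    exact mf_ext hT _ p hps hpk i

/-- reduction of a matrix factorization -/
theorem mf_of {S : Type} [CommRing S] (x : S) (nzd : ∀ s, x * s = 0 → s = 0)
    {ι : Type} [Fintype ι] [DecidableEq ι] (D D' : Matrix ι ι S)
    (h : D * D' = (x ^ 2) • 1) (h' : D' * D = (x^2) • 1) :
    MF (S ⧸ Ideal.span {x^2}) (D.map (Ideal.Quotient.mk (Ideal.span {x^2})))
      (D'.map (Ideal.Quotient.mk (Ideal.span {x^2}))) := by
  have key : ∀ (D D' : Matrix ι ι S), D * D' = (x ^ 2) • 1 → D' * D = (x^2) • 1 →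
      ∀ z, (D.map (Ideal.Quotient.mk (Ideal.span {x^2}))).mulVec z = 0 ↔
       ∃ w, (D'.map (Ideal.Quotient.mk (Ideal.span {x^2}))).mulVec w = z := by
    intro D D' h h' z
    constructor
    · intro hz
      choose y hy using fun j => Ideal.Quotient.mk_surjective (z j)
      obtain rfl : (fun j => Ideal.Quotient.mk (Ideal.span {x^2}) (y j)) = z := funext hy
      have : ∀ j, ∃ w, D.mulVec y j = x^2 * w := by
        intro j
        have := congrFun hz j
        have e : (D.map (Ideal.Quotient.mk (Ideal.span {x^2}))).mulVec
          (fun j => Ideal.Quotient.mk (Ideal.span {x^2}) (y j)) j =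
            Ideal.Quotient.mk (Ideal.span {x^2}) (D.mulVec y j) := by
          exact (RingHom.map_mulVec (Ideal.Quotient.mk (Ideal.span {x^2})) D y j).symm
        rw [e, Pi.zero_apply, Ideal.Quotient.eq_zero_iff_dvd] at this
        exact this
      choose w hw using this
      have e : x^2 • y = x^2 • D'.mulVec w := by
        have : D.mulVec y = x^2 • w := funext hw
        rw [← Matrix.mulVec_smul, ← this, Matrix.mulVec_mulVec, h', Matrix.smul_mulVec,
          Matrix.one_mulVec]
      refine ⟨fun j => Ideal.Quotient.mk (Ideal.span {x^2}) (w j), ?_⟩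
      ext j
      have e2 : (D'.map (Ideal.Quotient.mk (Ideal.span {x^2}))).mulVec
          (fun j => Ideal.Quotient.mk (Ideal.span {x^2}) (w j)) j =
            Ideal.Quotient.mk (Ideal.span {x^2}) (D'.mulVec w j) := by
        exact (RingHom.map_mulVec (Ideal.Quotient.mk (Ideal.span {x^2})) D' w j).symm
      rw [e2]
      congr 1
      have e3 := congrFun e j
      simp only [Pi.smul_apply, smul_eq_mul] at e3
      have := nzd _ (nzd (x * (y j - D'.mulVec w j)) (by linear_combination e3))
      exact (sub_eq_zero.1 this).symm
    · rintro ⟨w, rfl⟩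
      rw [Matrix.mulVec_mulVec, ← Matrix.map_mul, h]
      ext j
      have : ((x^2 • (1 : Matrix ι ι S)).map (Ideal.Quotient.mk (Ideal.span {x^2}))) = 0 := by
        ext a b
        simp only [Matrix.map_apply, Matrix.smul_apply, smul_eq_mul, Matrix.zero_apply]
        rw [Ideal.Quotient.eq_zero_iff_dvd]
        exact Dvd.intro _ rfl
      rw [this]; simp
  have tr : ∀ (D D' : Matrix ι ι S), D * D' = (x ^ 2) • 1 →
      D'.transpose * D.transpose = (x ^ 2) • 1 := by
    intro D D' h
    rw [← Matrix.transpose_mul, h]; simp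
  refine ⟨key D D' h h', key D' D h' h, ?_, ?_⟩
  · simpa [Matrix.transpose_map] using key D.transpose D'.transpose (tr _ _ h') (tr _ _ h)
  · simpa [Matrix.transpose_map] using key D'.transpose D.transpose (tr _ _ h) (tr _ _ h')



structure Setup (k S R : Type) [Field k] [CommRing S] [Algebra k S] [CommRing R] [Algebra k R]
    (n : Ideal S) (x : S) (f : S →+* R) : Prop extends MinMult k S n x where
  sur : Function.Surjective f
  ker : ∀ s, f s = 0 ↔ ∃ t, s = x ^ 2 * t
  alg : ∀ c : k, f (algebraMap k S c) = algebraMap k R c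

theorem exists_functional {k R : Type} [Field k] [CommRing R] [Algebra k R] {P : Type}
    [AddCommGroup P] [Module k P] [Module R P] [IsScalarTower k R P] (I : Ideal R) (s : P)
    (hs : s ∉ I • (⊤ : Submodule R P)) : ∃ l : P →ₗ[k] k, l s ≠ 0 ∧ ∀ t ∈ I, ∀ y : P, l (t • y) = 0 := by
  obtain ⟨Q, hQ⟩ : ∃ Q : Submodule k P, ∀ y, y ∈ Q ↔ y ∈ I • (⊤ : Submodule R P) :=
    ⟨(I • (⊤ : Submodule R P)).restrictScalars k, fun y => Submodule.restrictScalars_mem _ _ _⟩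
  obtain ⟨l, hl, hlQ⟩ := Submodule.exists_dual_map_eq_bot_of_notMem
    (p := Q) (x := s) (fun h => hs ((hQ _).1 h)) inferInstance
  refine ⟨l, hl, fun t ht y => ?_⟩
  have h1 : t • y ∈ Q := (hQ _).2 (Submodule.smul_mem_smul ht Submodule.mem_top)
  have h2 := Submodule.mem_map_of_mem (f := l) h1
  rw [hlQ] at h2
  exact (Submodule.mem_bot k).1 h2

namespace Setup

variable {k S R : Type} [Field k] [CommRing S] [Algebra k S] [CommRing R] [Algebra k R]
    {n : Ideal S} {x : S} {f : S →+* R}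

theorem mem (h : Setup k S R n x f) (r : R) : r ∈ n.map f ↔ ∃ s ∈ n, f s = r :=
  Ideal.mem_map_iff_of_surjective f h.sur

theorem xx (h : Setup k S R n x f) (s : S) : f x * (f x * f s) = 0 := by
  rw [← map_mul, ← map_mul, h.ker]
  exact ⟨s, by ring⟩

theorem cancel (h : Setup k S R n x f) {s : S} (hs : f x * f s = 0) : ∃ t, s = x * t := by
  rw [← map_mul, h.ker] at hs
  obtain ⟨t, ht⟩ := hs
  exact ⟨t, sub_eq_zero.1 (h.nzd _ (by linear_combination ht))⟩

/-- `n` kills `x n`. -/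
theorem nxn (h : Setup k S R n x f) {s t : S} (hs : s ∈ n) (ht : t ∈ n) :
    f s * (f x * f t) = 0 := by
  obtain ⟨w, _, hw⟩ := h.sq s hs t ht
  have : f s * (f x * f t) = f x * (f x * f w) := by
    rw [← map_mul f x w, ← hw, map_mul]; ring
  rw [this, h.xx]

theorem dec (h : Setup k S R n x f) (r : R) : ∃ c : k, ∃ s ∈ n, r = algebraMap k R c + f s := by
  obtain ⟨s, rfl⟩ := h.sur r
  obtain ⟨c, hc⟩ := h.H1 s
  exact ⟨c, _, hc, by rw [map_sub, h.alg]; ring⟩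

theorem decS (h : Setup k S R n x f) {b : ℕ} (g : Fin b → S) : ∃ c : Fin b → k, ∃ ν : Fin b → S,
    (∀ j, ν j ∈ n) ∧ ∀ j, g j = algebraMap k S (c j) + ν j := by
  choose c hc using fun j => h.H1 (g j)
  exact ⟨c, fun j => g j - algebraMap k S (c j), hc, fun j => by ring⟩

/-- The `K_i` lemma. -/
theorem Klem (h : Setup k S R n x f) {b b' : ℕ} (D : (Fin b → R) →ₗ[R] (Fin b' → R))
    (hD : ∀ ν : Fin b → S, (∀ j, ν j ∈ n) → D (fun j => f x * f (ν j)) = 0)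
    (hext : ∀ ψ : LinearMap.ker D →ₗ[R] R, ∃ c : Fin b → R, ∀ y : LinearMap.ker D,
      ψ y = c ⬝ᵥ y)
    (ν : Fin b → S) (hν : ∀ j, ν j ∈ n) :
    (fun j => f x * f (ν j)) ∈ n.map f • LinearMap.ker D := by
  by_contra hcon
  obtain ⟨y1, hy1, y2, hy2, h12⟩ := h.two
  set P := LinearMap.ker D with hP
  let s : P := ⟨fun j => f x * f (ν j), hD ν hν⟩
  have hsm : ∀ (c : k) (y : P), c • y = algebraMap k R c • y := fun c y => (algebraMap_smul R c y).symm
  have hs : s ∉ n.map f • (⊤ : Submodule R P) := by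
    intro hs
    apply hcon
    have : s.1 ∈ (n.map f • (⊤ : Submodule R P)).map P.subtype := ⟨s, hs, rfl⟩
    rw [Submodule.map_smul'', Submodule.map_top, Submodule.range_subtype] at this
    exact this
  obtain ⟨l, hl, hlQ⟩ := exists_functional (k := k) (n.map f) s hs
  have hlQ' : ∀ t ∈ n, ∀ y : P, l (f t • y) = 0 := by
    intro t ht y
    exact hlQ _ (Ideal.mem_map_of_mem f ht) y
  let ψ : P →ₗ[R] R :=
    { toFun := fun y => algebraMap k R (l y) * (f x * f y1)
      map_add' := fun a b => by rw [map_add, map_add, add_mul]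
      map_smul' := fun r y => by
        obtain ⟨c, t, ht, rfl⟩ := h.dec r
        rw [add_smul, map_add, hlQ' t ht, add_zero, ← hsm, map_smul, smul_eq_mul, map_mul]
        simp only [RingHom.id_apply, smul_eq_mul]
        have := h.nxn ht hy1
        linear_combination (-(algebraMap k R (l y))) * this }
  obtain ⟨c, hc⟩ := hext ψ
  have hψ : ∀ y, ψ y = algebraMap k R (l y) * (f x * f y1) := fun y => rfl
  have hcm : ∀ j, c j ∈ n.map f := by
    intro j
    obtain ⟨α, t, ht, hα⟩ := h.dec (c j)
    let w : P := ⟨fun i => f x * f (if i = j then y2 else 0), hD (fun i => if i = j then y2 else 0) (by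
      intro i; split_ifs
      · exact hy2
      · exact n.zero_mem)⟩
    have e := hc w
    have e2 : c ⬝ᵥ w = c j * (f x * f y2) := by
      rw [dotProduct, Finset.sum_eq_single j]
      · simp [w]
      · intro i _ hi; simp [w, hi]
      · simp
    rw [e2, hψ, hα] at e
    have e3 := h.nxn ht hy2
    have e4 : f x * f ((-(l w)) • y1 + α • y2) = 0 := by
      rw [Algebra.smul_def, Algebra.smul_def, map_add, map_mul, map_mul, h.alg, h.alg, map_neg]
      linear_combination (-1 : R) * e - e3
    obtain ⟨t', ht'⟩ := h.cancel e4
    have := (h12 _ _ _ ht').2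
    rw [hα, this, map_zero, zero_add]
    exact Ideal.mem_map_of_mem f ht
  have e := hc s
  have e2 : c ⬝ᵥ s = 0 := by
    apply Finset.sum_eq_zero
    intro j _
    obtain ⟨t, ht, htc⟩ := (h.mem _).1 (hcm j)
    rw [← htc]
    exact h.nxn ht (hν j)
  rw [e2, hψ] at e
  have e4 : f x * f ((l s) • y1 + (0:k) • y2) = 0 := by
    rw [zero_smul, add_zero, Algebra.smul_def, map_mul, h.alg]
    linear_combination e
  obtain ⟨t', ht'⟩ := h.cancel e4
  exact hl (h12 _ _ _ ht').1

end Setup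



namespace Setup

variable {k S R : Type} [Field k] [CommRing S] [Algebra k S] [CommRing R] [Algebra k R]
    {n : Ideal S} {x : S} {f : S →+* R}

theorem finR (h : Setup k S R n x f) : Module.Finite k R := by
  obtain ⟨d, v, hv, hg⟩ := h.gen
  let w : (Fin d ⊕ Fin d) ⊕ Unit → R :=
    Sum.elim (Sum.elim (fun i => f (v i)) (fun i => f x * f (v i))) (fun _ => 1)
  have hmap : ∀ c : Fin d → k, f (∑ i, c i • v i) = ∑ i, c i • f (v i) := by
    intro c
    rw [map_sum]
    refine Finset.sum_congr rfl fun i _ => ?_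
    rw [Algebra.smul_def, Algebra.smul_def, map_mul, h.alg]
  refine Module.Finite.of_surjective (Fintype.linearCombination k w) ?_
  intro r
  obtain ⟨a, s, hs, rfl⟩ := h.dec r
  obtain ⟨c, t, ht, rfl⟩ := hg s hs
  obtain ⟨c', t', ht', rfl⟩ := hg t ht
  refine ⟨Sum.elim (Sum.elim c c') (fun _ => a), ?_⟩
  rw [Fintype.linearCombination_apply, Fintype.sum_sum_type, Fintype.sum_sum_type]
  simp only [Sum.elim_inl, Sum.elim_inr, w]
  simp only [← mul_smul_comm, ← Finset.mul_sum]
  rw [map_add, map_mul, map_add, map_mul, hmap, hmap, mul_add, h.xx, Algebra.algebraMap_eq_smul_one]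
  simp
  ring

theorem kills (h : Setup k S R n x f) {b b' : ℕ} (D : (Fin b → R) →ₗ[R] (Fin b' → R))
    (hr : ∀ z i, D z i ∈ n.map f) (ν : Fin b → S) (hν : ∀ j, ν j ∈ n) :
    D (fun j => f x * f (ν j)) = 0 := by
  rw [LinearMap.pi_apply_eq_sum_univ D]
  ext i
  rw [Finset.sum_apply]
  apply Finset.sum_eq_zero
  intro j _
  rw [Pi.smul_apply, smul_eq_mul]
  obtain ⟨t, ht, hte⟩ := (h.mem _).1 (hr (fun l => if j = l then 1 else 0) i)
  rw [← hte]
  have := h.nxn (hν j) ht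
  linear_combination this

/-- the invariant of the descent -/
def J (k : Type) {S R : Type} [Field k] [CommRing S] [CommRing R] [Algebra k R]
    (n : Ideal S) (x : S) (f : S →+* R) {b : ℕ} (X : Submodule R (Fin b → R)) (N : ℕ) : Prop :=
  ∃ U : Submodule k (Fin b → R), ∃ u ∈ U, Module.finrank k U = N ∧ (∀ z ∈ U, z ∈ X) ∧
    (∀ z ∈ U, ∀ s ∈ n, ∃ z' ∈ U, f s • z = f x • z') ∧ f x • u = 0 ∧ u ∉ n.map f • X

theorem step (h : Setup k S R n x f) {b b' : ℕ} (D : (Fin b → R) →ₗ[R] (Fin b' → R))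
    (hr : ∀ z i, D z i ∈ n.map f)
    (hext : ∀ ψ : LinearMap.ker D →ₗ[R] R, ∃ c : Fin b → R, ∀ y : LinearMap.ker D,
      ψ y = c ⬝ᵥ y) (N : ℕ) (hJ : J k n x f (LinearMap.ker D) N) :
    ∃ N' < N, J k n x f (LinearMap.range D) N' := by
  have hD := h.kills D hr
  have := h.finR
  obtain ⟨U, u, huU, rfl, hUX, hU, hxu, hu⟩ := hJ
  let L : Submodule S (Fin b → S) :=
    { carrier := {g | (∀ j, g j ∈ n) ∧ ∃ z ∈ U, ∃ ν : Fin b → S, (∀ j, ν j ∈ n) ∧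
        ∀ j, f (g j) = z j + f x * f (ν j)}
      add_mem' := by
        rintro g g' ⟨hg, z, hz, ν, hν, e⟩ ⟨hg', z', hz', ν', hν', e'⟩
        refine ⟨fun j => n.add_mem (hg j) (hg' j), z + z', U.add_mem hz hz', ν + ν',
          fun j => n.add_mem (hν j) (hν' j), fun j => ?_⟩
        simp only [Pi.add_apply, map_add, e, e']; ring
      zero_mem' := ⟨fun j => n.zero_mem, 0, U.zero_mem, 0, fun j => n.zero_mem, by simp⟩
      smul_mem' := by
        rintro s g ⟨hg, z, hz, ν, hν, e⟩
        obtain ⟨c, hc⟩ := h.H1 s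
        choose t ht hte using fun j => h.sq _ hc _ (hg j)
        refine ⟨fun j => n.mul_mem_left _ (hg j), c • z, U.smul_mem _ hz,
          fun j => algebraMap k S c * ν j + t j,
          fun j => n.add_mem (n.mul_mem_left _ (hν j)) (ht j), fun j => ?_⟩
        have e1 : s * g j = algebraMap k S c * g j + x * t j := by
          linear_combination hte j
        rw [Pi.smul_apply, smul_eq_mul, e1, map_add, map_mul, map_mul, e, Pi.smul_apply,
          Algebra.smul_def, map_add, map_mul, h.alg]
        ring }
  have hLmem : ∀ g, g ∈ L ↔ (∀ j, g j ∈ n) ∧ ∃ z ∈ U, ∃ ν : Fin b → S, (∀ j, ν j ∈ n) ∧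
        ∀ j, f (g j) = z j + f x * f (ν j) := fun g => Iff.rfl
  clear_value L
  have hLsq : ∀ ν : Fin b → S, (∀ j, ν j ∈ n) → x • ν ∈ L := by
    intro ν hν
    refine (hLmem _).2 ⟨fun j => n.mul_mem_left _ (hν j), 0, U.zero_mem, ν, hν, fun j => ?_⟩
    rw [Pi.smul_apply, smul_eq_mul, map_mul]; simp
  let ι : (Fin b → k) → (Fin b → S) := fun c j => algebraMap k S (c j)
  let C : Submodule k (Fin b → k) :=
    { carrier := {c | x ^ 2 • ι c ∈ n • L}
      add_mem' := by
        intro c c' hc hc'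
        have : x ^ 2 • ι (c + c') = x ^ 2 • ι c + x ^ 2 • ι c' := by
          ext j; simp [ι]; ring
        change x ^ 2 • ι (c + c') ∈ n • L
        rw [this]
        exact (n • L).add_mem hc hc'
      zero_mem' := by
        change x ^ 2 • ι 0 ∈ n • L
        have : x ^ 2 • ι 0 = 0 := by ext j; simp [ι]
        rw [this]; exact (n • L).zero_mem
      smul_mem' := by
        intro a c hc
        have : x ^ 2 • ι (a • c) = algebraMap k S a • (x ^ 2 • ι c) := by
          ext j; simp [ι]; ring
        change x ^ 2 • ι (a • c) ∈ n • L
        rw [this]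
        exact (n • L).smul_mem _ hc }
  have hCmem : ∀ c, c ∈ C ↔ x ^ 2 • ι c ∈ n • L := fun c => Iff.rfl
  clear_value C
  have claim1 : ∀ g ∈ n • L, ∃ g' ∈ L, ∃ c ∈ C, g = x • g' + x ^ 2 • ι c := by
    intro g hg
    induction hg using Submodule.smul_induction_on' with
    | smul s hs g hg =>
      obtain ⟨hgn, z, hz, ν, hν, e⟩ := (hLmem g).1 hg
      obtain ⟨z', hz', hzz⟩ := hU z hz s hs
      choose h' hh' using fun j => h.sur (z' j)
      have e1 : ∀ j, f (s * g j - x * h' j) = 0 := by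
        intro j
        have := congrFun hzz j
        rw [Pi.smul_apply, Pi.smul_apply, smul_eq_mul, smul_eq_mul, ← hh'] at this
        rw [map_sub, map_mul, map_mul, e]
        have e2 := h.nxn hs (hν j)
        linear_combination this + e2
      choose q hq using fun j => (h.ker _).1 (e1 j)
      choose t ht hte using fun j => h.sq _ hs _ (hgn j)
      have hh'n : ∀ j, h' j ∈ n := by
        intro j
        have : t j - h' j - x * q j = 0 := h.nzd _ (by
          have e3 := hq j
          have e4 := hte j
          linear_combination e3 - e4)
        have : h' j = t j - x * q j := by linear_combination - this
        rw [this]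
        exact n.sub_mem (ht j) (n.mul_mem_right _ h.xn)
      obtain ⟨c, μ, hμ, hcμ⟩ := h.decS q
      have hL' : h' + x • μ ∈ L := L.add_mem ((hLmem _).2 ⟨hh'n, z', hz', 0, fun _ => n.zero_mem,
        fun j => by simp [hh']⟩) (hLsq μ hμ)
      have heq : s • g = x • (h' + x • μ) + x ^ 2 • ι c := by
        ext j
        have e3 := hq j
        rw [hcμ] at e3
        simp only [Pi.smul_apply, Pi.add_apply, smul_eq_mul, ι]
        linear_combination e3
      refine ⟨_, hL', c, ?_, heq⟩
      rw [hCmem]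
      have : x ^ 2 • ι c = s • g - x • (h' + x • μ) := by rw [heq]; abel
      rw [this]
      exact (n • L).sub_mem (Submodule.smul_mem_smul hs hg) (Submodule.smul_mem_smul h.xn hL')
    | add g1 _ g2 _ h1 h2 =>
      obtain ⟨g1', hg1, c1, hc1, e1⟩ := h1
      obtain ⟨g2', hg2, c2, hc2, e2⟩ := h2
      refine ⟨_, L.add_mem hg1 hg2, _, C.add_mem hc1 hc2, ?_⟩
      rw [e1, e2]
      ext j
      simp [ι]; ring
  have claim2 : ∀ c ∈ C, ∀ v ∈ n, ∃ g ∈ L, ∃ c' ∈ C, v • ι c = g + x • ι c' := by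
    intro c hc v hv
    have h1 : ∀ g ∈ n • L, ∃ g' ∈ n • L, v • g = x • g' := by
      intro g hg
      induction hg using Submodule.smul_induction_on' with
      | smul s hs g hg =>
        obtain ⟨t, ht, hte⟩ := h.sq v hv s hs
        exact ⟨t • g, Submodule.smul_mem_smul ht hg, by rw [smul_smul, hte, smul_smul]⟩
      | add g1 _ g2 _ h1 h2 =>
        obtain ⟨g1', hg1, e1⟩ := h1
        obtain ⟨g2', hg2, e2⟩ := h2
        exact ⟨_, (n • L).add_mem hg1 hg2, by rw [smul_add, smul_add, e1, e2]⟩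
    obtain ⟨g', hg', e⟩ := h1 _ ((hCmem c).1 hc)
    obtain ⟨g, hg, c', hc', e'⟩ := claim1 g' hg'
    refine ⟨g, hg, c', hc', ?_⟩
    ext j
    have e1 := congrFun e j
    rw [e'] at e1
    simp only [Pi.smul_apply, Pi.add_apply, smul_eq_mul] at e1 ⊢
    exact sub_eq_zero.1 (h.nzd _ (h.nzd _ (by linear_combination e1)))
  -- the element `a`
  obtain ⟨a, ν, hν, haC, hua⟩ : ∃ a : Fin b → k, ∃ ν : Fin b → S, (∀ j, ν j ∈ n) ∧ a ∈ C ∧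
      ∀ j, u j = f x * algebraMap k R (a j) + f x * f (ν j) := by
    choose w hw using fun j => h.sur (u j)
    have : ∀ j, ∃ t, w j = x * t := fun j => h.cancel (by
      have := congrFun hxu j
      rw [Pi.smul_apply, smul_eq_mul, ← hw] at this
      exact this)
    choose t ht using this
    obtain ⟨a, ν, hν, e⟩ := h.decS t
    have hua : ∀ j, u j = f x * algebraMap k R (a j) + f x * f (ν j) := by
      intro j
      rw [← hw, ht, e, map_mul, map_add, h.alg, mul_add]
    refine ⟨a, ν, hν, ?_, hua⟩
    rw [hCmem]
    have : x ^ 2 • ι a = x • (x • ι a) := by rw [smul_smul, pow_two]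
    rw [this]
    refine Submodule.smul_mem_smul h.xn ((hLmem _).2 ⟨fun j => n.mul_mem_right _ h.xn, u, huU,
      fun j => - ν j, fun j => n.neg_mem (hν j), fun j => ?_⟩)
    rw [hua, Pi.smul_apply, smul_eq_mul, map_mul, map_neg, h.alg]
    ring
  let κ : (Fin b → k) →ₗ[k] (Fin b → R) := (Algebra.linearMap k R).compLeft (Fin b)
  have hκ : ∀ c j, κ c j = algebraMap k R (c j) := fun c j => rfl
  have hκf : ∀ c j, κ c j = f (ι c j) := fun c j => (h.alg _).symm
  let Dk : (Fin b → R) →ₗ[k] (Fin b' → R) := D.restrictScalars k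
  have hLD : ∀ g ∈ L, D (fun j => f (g j)) = 0 := by
    intro g hg
    obtain ⟨_, z, hz, μ, hμ, e⟩ := (hLmem g).1 hg
    have : (fun j => f (g j)) = z + fun j => f x * f (μ j) := funext e
    rw [this, map_add, hD μ hμ, add_zero]
    exact hUX z hz
  have huκ : u = f x • κ a + fun j => f x * f (ν j) := funext hua
  have hDu : D u = 0 := hUX u huU
  refine ⟨_, ?_, C.map (Dk ∘ₗ κ), D (κ a), ⟨a, haC, rfl⟩, rfl, ?_, ?_, ?_, ?_⟩
  · -- dimension
    refine lt_of_le_of_lt (Submodule.finrank_map_le _ _) ?_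
    obtain ⟨y, hy, y2, hy2, h12⟩ := h.two
    let M2 : Submodule k (Fin b → R) :=
      { carrier := {z | ∃ t : Fin b → S, z = fun j => f x * f (t j)}
        add_mem' := by
          rintro _ _ ⟨t, rfl⟩ ⟨t', rfl⟩
          exact ⟨t + t', by ext j; simp [mul_add]⟩
        zero_mem' := ⟨0, by ext j; simp⟩
        smul_mem' := by
          rintro c _ ⟨t, rfl⟩
          exact ⟨fun j => algebraMap k S c * t j, by
            ext j
            simp only [Pi.smul_apply, Algebra.smul_def, map_mul, h.alg]; ring⟩ }
    have hM2 : ∀ z, z ∈ M2 ↔ ∃ t : Fin b → S, z = fun j => f x * f (t j) := fun z => Iff.rfl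
    clear_value M2
    let β : U →ₗ[k] ((Fin b → R) ⧸ M2) := M2.mkQ ∘ₗ U.subtype
    let my : (Fin b → R) →ₗ[k] (Fin b → R) := (LinearMap.lsmul R (Fin b → R) (f y)).restrictScalars k
    let γ : C →ₗ[k] ((Fin b → R) ⧸ M2) := M2.mkQ ∘ₗ my ∘ₗ κ ∘ₗ C.subtype
    have hγ : Function.Injective γ := by
      rw [injective_iff_map_eq_zero]
      intro c hc
      have hc' : my (κ c.1) ∈ M2 := (Submodule.Quotient.mk_eq_zero M2).1 hc
      obtain ⟨t, ht⟩ := (hM2 _).1 hc'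
      ext j
      have e := congrFun ht j
      change f y * κ c.1 j = _ at e
      rw [hκf] at e
      have : f ((c.1 j) • y + (0:k) • y2 - x * t j) = 0 := by
        rw [zero_smul, add_zero, Algebra.smul_def, map_sub, map_mul, map_mul]
        linear_combination e
      obtain ⟨q, hq⟩ := (h.ker _).1 this
      exact (h12 (c.1 j) 0 (t j + x * q) (by linear_combination hq)).1
    have hrange : LinearMap.range γ ≤ LinearMap.range β := by
      rintro _ ⟨c, rfl⟩
      obtain ⟨g, hg, c', hc', e⟩ := claim2 c.1 c.2 y hy
      obtain ⟨_, z, hz, μ, hμ, e'⟩ := (hLmem g).1 hg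
      refine ⟨⟨z, hz⟩, ?_⟩
      refine (Submodule.Quotient.eq M2).2 ((hM2 _).2 ⟨fun j => - μ j - ι c' j, ?_⟩)
      ext j
      have e1 := congrArg f (congrFun e j)
      have e2 := e' j
      simp only [Pi.smul_apply, Pi.add_apply, smul_eq_mul, map_mul, map_add] at e1
      change z j - f y * κ c.1 j = _
      rw [hκf, map_sub, map_neg]
      linear_combination - e1 - e2
    have h1 := LinearMap.finrank_range_add_finrank_ker β
    have h2 : 0 < Module.finrank k (LinearMap.ker β) := by
      refine (Module.finrank_pos_iff_exists_ne_zero (R := k) (M := LinearMap.ker β)).2 ?_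
      refine ⟨⟨⟨u, huU⟩, ?_⟩, ?_⟩
      · rw [LinearMap.mem_ker]
        refine (Submodule.Quotient.mk_eq_zero M2).2 ((hM2 _).2 ⟨fun j => ι a j + ν j, ?_⟩)
        ext j
        change u j = _
        rw [hua, map_add, ← hκf, hκ, mul_add]
      · intro h0
        apply hu
        have : u = 0 := congrArg (fun t => t.1.1) h0
        rw [this]; exact Submodule.zero_mem _
    have h3 := LinearMap.finrank_range_of_inj hγ
    have h4 := Submodule.finrank_mono hrange
    omega
  · rintro _ ⟨c, _, rfl⟩
    exact ⟨κ c, rfl⟩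
  · rintro _ ⟨c, hc, rfl⟩ v hv
    obtain ⟨g, hg, c', hc', e⟩ := claim2 c hc v hv
    refine ⟨_, ⟨c', hc', rfl⟩, ?_⟩
    change f v • D (κ c) = f x • D (κ c')
    have : f v • κ c = (fun j => f (g j)) + f x • κ c' := by
      ext j
      have e1 := congrArg f (congrFun e j)
      simp only [Pi.smul_apply, Pi.add_apply, smul_eq_mul, map_mul, map_add] at e1 ⊢
      rw [hκf, hκf]
      exact e1
    rw [← map_smul, this, map_add, hLD g hg, zero_add, map_smul]
  · rw [huκ, map_add, hD ν hν, add_zero, map_smul] at hDu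
    exact hDu
  · intro hcon
    rw [← Submodule.map_top, ← Submodule.map_smul''] at hcon
    obtain ⟨w, hw, hwe⟩ := hcon
    have hwm : ∀ j, w j ∈ n.map f := by
      intro j
      have : n.map f • (⊤ : Submodule R (Fin b → R)) ≤
          Submodule.comap (LinearMap.proj j) (n.map f) := by
        rw [Submodule.smul_le]
        intro r hr z _
        rw [Submodule.mem_comap]
        change r * z j ∈ n.map f
        exact Ideal.mul_mem_right _ _ hr
      exact this hw
    choose t ht hte using fun j => (h.mem _).1 (hwm j)
    have hy : κ a - w ∈ LinearMap.ker D := by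
      rw [LinearMap.mem_ker, map_sub, hwe, sub_self]
    have e1 := h.Klem D hD hext (fun j => ν j + t j) (fun j => n.add_mem (hν j) (ht j))
    have e2 : f x • (κ a - w) ∈ n.map f • LinearMap.ker D :=
      Submodule.smul_mem_smul (Ideal.mem_map_of_mem f h.xn) hy
    apply hu
    have : u = f x • (κ a - w) + fun j => f x * f (ν j + t j) := by
      ext j
      rw [hua, Pi.add_apply, Pi.smul_apply, Pi.sub_apply, smul_eq_mul, map_add, hte, hκ]
      ring
    rw [this]
    exact Submodule.add_mem _ e2 e1

end Setup



theorem exists_transpose {R : Type} [CommRing R] {b b' : ℕ} (d : (Fin b' → R) →ₗ[R] (Fin b → R)) :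
    ∃ t : (Fin b → R) →ₗ[R] (Fin b' → R), ∀ z y, d z ⬝ᵥ y = z ⬝ᵥ t y := by
  refine ⟨(LinearMap.toMatrix' d).transpose.mulVecLin, fun z y => ?_⟩
  rw [Matrix.mulVecLin_apply, Matrix.mulVec_transpose, dotProduct_comm z,
    ← Matrix.dotProduct_mulVec, LinearMap.toMatrix'_mulVec, dotProduct_comm]

theorem dot_nondeg {R : Type} [CommRing R] {b : ℕ} (y : Fin b → R) (h : ∀ z, z ⬝ᵥ y = 0) : y = 0 := by
  ext j
  have := h (Pi.single j 1)
  rwa [single_dotProduct, one_mul] at this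

theorem min_cover {R : Type} [CommRing R] (I : Ideal R) (hI : ∀ r, r ∉ I → IsUnit r)
    (M : Type) [AddCommGroup M] [Module R M] [Module.Finite R M] :
    ∃ b : ℕ, ∃ p : (Fin b → R) →ₗ[R] M, Function.Surjective p ∧ ∀ z, p z = 0 → ∀ j, z j ∈ I := by
  classical
  have hex : ∃ b : ℕ, ∃ p : (Fin b → R) →ₗ[R] M, Function.Surjective p := by
    obtain ⟨b, p, hp⟩ := Module.Finite.exists_fin' R M
    exact ⟨b, p, hp⟩
  obtain ⟨p, hp⟩ := Nat.find_spec hex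
  have hmin := fun m => Nat.find_min hex (m := m)
  revert hmin p
  generalize Nat.find hex = b
  intro p hp hmin
  refine ⟨b, p, hp, fun z hz j => ?_⟩
  by_contra hj
  obtain ⟨c, hc⟩ := (hI _ hj).exists_left_inv
  rcases b with _ | b
  · exact j.elim0
  apply hmin b (Nat.lt_succ_self b)
  -- drop the j-th generator
  let e : (Fin b → R) →ₗ[R] (Fin (b+1) → R) :=
    { toFun := fun y => j.insertNth 0 y
      map_add' := fun y y' => by
        ext i; refine Fin.succAboveCases j ?_ (fun i => ?_) i <;> simp
      map_smul' := fun r y => by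
        ext i; refine Fin.succAboveCases j ?_ (fun i => ?_) i <;> simp }
  refine ⟨p ∘ₗ e, fun m => ?_⟩
  obtain ⟨y, rfl⟩ := hp m
  refine ⟨fun i => y (j.succAbove i) - y j * c * z (j.succAbove i), ?_⟩
  have : e (fun i => y (j.succAbove i) - y j * c * z (j.succAbove i)) = y - (y j * c) • z := by
    ext i
    refine Fin.succAboveCases j ?_ (fun i => ?_) i
    · simp [e, mul_assoc, hc]
    · simp [e]
  rw [LinearMap.comp_apply, this, map_sub, map_smul, hz, smul_zero, sub_zero]

theorem min_res {R : Type} [CommRing R] [IsNoetherianRing R] (I : Ideal R)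
    (hI : ∀ r, r ∉ I → IsUnit r)
    (M : Type) [AddCommGroup M] [Module R M] [Module.Finite R M] :
    ∃ (b : ℕ → ℕ) (p : (Fin (b 0) → R) →ₗ[R] M)
      (d : ∀ i, (Fin (b (i+1)) → R) →ₗ[R] (Fin (b i) → R)),
      Function.Surjective p ∧ (∀ z, p z = 0 ↔ ∃ w, d 0 w = z) ∧
      (∀ i z, d i z = 0 ↔ ∃ w, d (i+1) w = z) ∧ ∀ i z j, d i z j ∈ I := by
  obtain ⟨b0, p, hp, hpI⟩ := min_cover I hI M
  let T := Σ b : ℕ, Submodule R (Fin b → R)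
  have hc : ∀ t : T, ∃ b' : ℕ, ∃ d : (Fin b' → R) →ₗ[R] (Fin t.1 → R),
      LinearMap.range d = t.2 ∧ ∀ z, d z = 0 → ∀ j, z j ∈ I := by
    rintro ⟨b, K⟩
    obtain ⟨b', q, hq, hqI⟩ := min_cover I hI K
    refine ⟨b', K.subtype ∘ₗ q, ?_, fun z hz => hqI z ?_⟩
    · rw [LinearMap.range_comp, LinearMap.range_eq_top.2 hq, Submodule.map_top,
        Submodule.range_subtype]
    · exact Subtype.ext hz
  choose nb nd hr hm using hc
  let st : ℕ → T := fun i => Nat.rec ⟨b0, LinearMap.ker p⟩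
    (fun _ t => ⟨nb t, LinearMap.ker (nd t)⟩) i
  refine ⟨fun i => (st i).1, p, fun i => nd (st i), hp, ?_, ?_, ?_⟩
  · intro z
    have : LinearMap.range (nd (st 0)) = LinearMap.ker p := hr (st 0)
    rw [← LinearMap.mem_ker, ← this]; rfl
  · intro i z
    have : LinearMap.range (nd (st (i+1))) = LinearMap.ker (nd (st i)) := hr (st (i+1))
    rw [← LinearMap.mem_ker, ← this]; rfl
  · intro i z j
    have hz : nd (st i) z ∈ (st i).2 := by rw [← hr]; exact ⟨z, rfl⟩
    cases i with
    | zero => exact hpI _ hz j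
    | succ i => exact hm _ _ hz j

namespace Setup

variable {k S R : Type} [Field k] [CommRing S] [Algebra k S] [CommRing R] [Algebra k R]
    {n : Ideal S} {x : S} {f : S →+* R}

theorem unit (h : Setup k S R n x f) (r : R) (hr : r ∉ n.map f) : IsUnit r := by
  obtain ⟨c, s, hs, rfl⟩ := h.dec r
  have hc : c ≠ 0 := by
    rintro rfl
    apply hr
    rw [map_zero, zero_add]
    exact Ideal.mem_map_of_mem f hs
  refine IsNilpotent.isUnit_add_left_of_commute ⟨3, ?_⟩
    ((IsUnit.mk0 c hc).map (algebraMap k R)) (Commute.all _ _)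
  obtain ⟨t, ht, e⟩ := h.sq s hs s hs
  have := h.nxn hs ht
  rw [← map_mul f x, ← e, map_mul] at this
  linear_combination this

theorem descent (h : Setup k S R n x f) (X : Type) [AddCommGroup X] [Module R X]
    [Module.Finite R X] (hev : Function.Bijective (Module.Dual.eval R X))
    (hE : ∀ i : ℕ, 0 < i → Subsingleton (ExtGrp R (Module.Dual R X) R i))
    (U : Submodule R X) (u : X) (huU : u ∈ U)
    (hU : ∀ z ∈ U, ∀ s ∈ n, ∃ z' ∈ U, f s • z = f x • z')
    (hxu : f x • u = 0) (hu : u ∉ n.map f • (⊤ : Submodule R X)) : False := by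
  have hfin := h.finR
  have hN : IsNoetherianRing R := isNoetherian_of_tower k (inferInstance : IsNoetherian k R)
  obtain ⟨b, p, d, hp, h0, h1, hm⟩ := min_res (n.map f) h.unit (Module.Dual R X)
  choose D hD using fun i => exists_transpose (d i)
  have hDm : ∀ i z j, D i z j ∈ n.map f := by
    intro i z j
    have e := hD i (Pi.single j 1) z
    rw [single_dotProduct, one_mul] at e
    rw [← e]
    exact Ideal.sum_mem _ fun l _ => Ideal.mul_mem_right _ _ (hm _ _ _)
  have hDD : ∀ i, LinearMap.range (D i) = LinearMap.ker (D (i+1)) := by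
    intro i
    apply le_antisymm
    · rintro _ ⟨y, rfl⟩
      rw [LinearMap.mem_ker]
      apply dot_nondeg
      intro z
      rw [← hD, ← hD, (h1 i _).2 ⟨z, rfl⟩, zero_dotProduct]
    · intro c hc
      have := (exists_res R (Module.Dual R X) (fun i => Fin (b i) → R) d p hp h0 h1 R i).1
        (hE (i+1) (Nat.succ_pos i)) (dotProductBilin R R c) (by
          refine LinearMap.ext fun z => ?_
          change c ⬝ᵥ d (i+1) z = 0
          rw [dotProduct_comm, hD, LinearMap.mem_ker.1 hc, dotProduct_zero])
      obtain ⟨g, hg⟩ := this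
      obtain ⟨a, ha⟩ := fun_eq_dot g
      refine ⟨a, sub_eq_zero.1 (dot_nondeg _ fun z => ?_)⟩
      have e : g (d i z) = c ⬝ᵥ z := LinearMap.congr_fun hg z
      rw [ha, dotProduct_comm, hD, dotProduct_comm c] at e
      rw [dotProduct_sub, e, sub_self]
  -- the embedding of X
  let ι : X →ₗ[R] (Fin (b 0) → R) := LinearMap.pi fun j => p (Pi.single j 1)
  have hι : ∀ z t, p z t = z ⬝ᵥ ι t := by
    intro z t
    obtain ⟨c, hc⟩ := fun_eq_dot ((Module.Dual.eval R X t) ∘ₗ p)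
    have : c = ι t := by
      ext j
      have e := hc (Pi.single j 1)
      rw [dotProduct_single, mul_one] at e
      exact e.symm
    rw [← this, dotProduct_comm]
    exact hc z
  have hιinj : Function.Injective ι := by
    rw [injective_iff_map_eq_zero]
    intro t ht
    apply (injective_iff_map_eq_zero _).1 hev.1
    refine LinearMap.ext fun φ => ?_
    obtain ⟨z, rfl⟩ := hp φ
    rw [Module.Dual.eval_apply, hι, ht, dotProduct_zero]; rfl
  have hιr : LinearMap.range ι = LinearMap.ker (D 0) := by
    apply le_antisymm
    · rintro _ ⟨t, rfl⟩
      rw [LinearMap.mem_ker]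
      apply dot_nondeg
      intro z
      rw [← hD, ← hι, (h0 _).2 ⟨z, rfl⟩]; rfl
    · intro θ hθ
      have hk : LinearMap.ker p ≤ LinearMap.ker (dotProductBilin R R θ) := by
        intro z hz
        obtain ⟨w, rfl⟩ := (h0 z).1 hz
        rw [LinearMap.mem_ker]
        change θ ⬝ᵥ d 0 w = 0
        rw [dotProduct_comm, hD, LinearMap.mem_ker.1 hθ, dotProduct_zero]
      let Θ : Module.Dual R X →ₗ[R] R :=
        ((LinearMap.ker p).liftQ (dotProductBilin R R θ) hk) ∘ₗ
          (p.quotKerEquivOfSurjective hp).symm.toLinearMap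
      have hΘ : ∀ z, Θ (p z) = θ ⬝ᵥ z := by
        intro z
        have : (p.quotKerEquivOfSurjective hp).symm (p z) = (LinearMap.ker p).mkQ z := by
          rw [LinearEquiv.symm_apply_eq]; rfl
        change (LinearMap.ker p).liftQ _ hk ((p.quotKerEquivOfSurjective hp).symm (p z)) = _
        rw [this]; rfl
      obtain ⟨t, ht⟩ := hev.2 Θ
      refine ⟨t, ?_⟩
      ext j
      have e := hΘ (Pi.single j 1)
      rw [← ht, dotProduct_single, mul_one] at e
      exact e
  have hext : ∀ i, ∀ ψ : LinearMap.ker (D i) →ₗ[R] R, ∃ c : Fin (b i) → R,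
      ∀ y : LinearMap.ker (D i), ψ y = c ⬝ᵥ y := by
    intro i
    cases i with
    | zero =>
      intro ψ
      let ι' : X →ₗ[R] LinearMap.ker (D 0) := ι.codRestrict _ (fun t => by
        rw [← hιr]; exact ⟨t, rfl⟩)
      obtain ⟨z, hz⟩ := hp (ψ ∘ₗ ι')
      refine ⟨z, ?_⟩
      rintro ⟨y, hy⟩
      obtain ⟨t, rfl⟩ : y ∈ LinearMap.range ι := by rw [hιr]; exact hy
      have := LinearMap.congr_fun hz t
      rw [hι] at this
      exact this.symm
    | succ i =>
      intro ψ
      let D' : (Fin (b i) → R) →ₗ[R] LinearMap.ker (D (i+1)) := (D i).codRestrict _ (fun t => by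
        rw [← hDD]; exact ⟨t, rfl⟩)
      obtain ⟨c, hc⟩ := fun_eq_dot (ψ ∘ₗ D')
      have hker : ∀ y, D i y = 0 → c ⬝ᵥ y = 0 := by
        intro y hy
        rw [← hc]
        have : D' y = 0 := Subtype.ext hy
        rw [LinearMap.comp_apply, this, map_zero]
      obtain ⟨w, hw⟩ : ∃ w, d i w = c := by
        cases i with
        | zero =>
          rw [← h0]
          refine LinearMap.ext fun t => ?_
          rw [hι]
          apply hker
          rw [← LinearMap.mem_ker, ← hιr]
          exact ⟨t, rfl⟩
        | succ i =>
          rw [← h1]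
          apply dot_nondeg
          intro y
          rw [dotProduct_comm, hD]
          apply hker
          rw [← LinearMap.mem_ker, ← hDD]
          exact ⟨y, rfl⟩
      refine ⟨w, ?_⟩
      rintro ⟨y, hy⟩
      obtain ⟨t, rfl⟩ : y ∈ LinearMap.range (D i) := by rw [hDD]; exact hy
      have := hc t
      rw [← hw, hD] at this
      exact this
  have hstart : ∃ N, J k n x f (LinearMap.ker (D 0)) N := by
    refine ⟨_, (U.map ι).restrictScalars k, ι u, ⟨u, huU, rfl⟩, rfl, ?_, ?_, ?_, ?_⟩
    · rintro _ ⟨t, _, rfl⟩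
      rw [← hιr]; exact ⟨t, rfl⟩
    · rintro _ ⟨t, ht, rfl⟩ s hs
      obtain ⟨z', hz', e⟩ := hU t ht s hs
      exact ⟨ι z', ⟨z', hz', rfl⟩, by rw [← map_smul, e, map_smul]⟩
    · rw [← map_smul, hxu, map_zero]
    · intro hc
      rw [← hιr, ← Submodule.map_top, ← Submodule.map_smul''] at hc
      obtain ⟨t, ht, e⟩ := hc
      rw [← hιinj e] at hu
      exact hu ht
  have hstep : ∀ i N, J k n x f (LinearMap.ker (D i)) N →
      ∃ N' < N, J k n x f (LinearMap.ker (D (i+1))) N' := by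
    intro i N hJ
    rw [← hDD]
    exact h.step (D i) (hDm i) (hext i) N hJ
  have hno : ∀ N i, ¬ J k n x f (LinearMap.ker (D i)) N := by
    intro N
    induction N using Nat.strong_induction_on with
    | _ N ih =>
      intro i hJ
      obtain ⟨N', hN', hJ'⟩ := hstep i N hJ
      exact ih N' hN' (i+1) hJ'
  obtain ⟨N, hJ⟩ := hstart
  exact hno N 0 hJ

end Setup



theorem exists_factor {S : Type} [CommRing S] (n : Ideal S) (x : S)
    (nzd : ∀ s, x * s = 0 → s = 0) (sq : ∀ v ∈ n, ∀ w ∈ n, ∃ t ∈ n, v * w = x * t)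
    {ι : Type} [Fintype ι] [DecidableEq ι] (lvl : ι → ℕ) (N : ℕ) (hl : ∀ a, lvl a ≤ N)
    (A : Matrix ι ι S) (hA : ∀ a b, A a b ∈ n) (hs : ∀ a b, A a b ≠ 0 → lvl a < lvl b) :
    ∃ D' : Matrix ι ι S, (x • 1 - A) * D' = x ^ 2 • 1 ∧ D' * (x • 1 - A) = x ^ 2 • 1 := by
  have hnext : ∀ B : {B : Matrix ι ι S // ∀ a b, B a b ∈ n},
      ∃ B' : {B : Matrix ι ι S // ∀ a b, B a b ∈ n}, A * B.1 = x • B'.1 := by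
    rintro ⟨B, hB⟩
    choose t ht hte using fun a c b => sq _ (hA a c) _ (hB c b)
    refine ⟨⟨Matrix.of fun a b => ∑ c, t a c b, fun a b => n.sum_mem fun c _ => ht a c b⟩, ?_⟩
    ext a b
    rw [Matrix.mul_apply, Matrix.smul_apply, smul_eq_mul]
    change _ = x * ∑ c, t a c b
    rw [Finset.mul_sum]
    exact Finset.sum_congr rfl fun c _ => hte a c b
  choose nx hnx using hnext
  let B : ℕ → {B : Matrix ι ι S // ∀ a b, B a b ∈ n} := fun j => Nat.rec ⟨A, hA⟩ (fun _ B => nx B) j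
  have hB0 : (B 0).1 = A := rfl
  have hB : ∀ j, A * (B j).1 = x • (B (j+1)).1 := fun j => hnx (B j)
  clear_value B
  have hcanc : ∀ M M' : Matrix ι ι S, x • M = x • M' → M = M' := by
    intro M M' hM
    ext a b
    have e := congrFun (congrFun hM a) b
    rw [Matrix.smul_apply, Matrix.smul_apply, smul_eq_mul, smul_eq_mul] at e
    exact sub_eq_zero.1 (nzd _ (by linear_combination e))
  have hcomm : ∀ j, A * (B j).1 = (B j).1 * A := by
    intro j
    induction j with
    | zero => rw [hB0]
    | succ j ih =>
      apply hcanc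
      rw [← Matrix.mul_smul, ← Matrix.smul_mul, ← hB, Matrix.mul_assoc A, ← ih]
  have hsup : ∀ j a b, (B j).1 a b ≠ 0 → lvl a + j < lvl b := by
    intro j
    induction j with
    | zero => intro a b hab; rw [hB0] at hab; exact hs a b hab
    | succ j ih =>
      intro a b hab
      have e : (A * (B j).1) a b ≠ 0 := by
        rw [hB, Matrix.smul_apply, smul_eq_mul]
        exact fun h0 => hab (nzd _ h0)
      rw [Matrix.mul_apply] at e
      obtain ⟨c, _, hc⟩ := Finset.exists_ne_zero_of_sum_ne_zero e
      have h1 := hs a c (left_ne_zero_of_mul hc)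
      have h2 := ih c b (right_ne_zero_of_mul hc)
      omega
  have hBN : (B N).1 = 0 := by
    ext a b
    by_contra h0
    have := hsup N a b h0
    have := hl b
    omega
  have tel : ∀ M, (x • 1 - A) * (x • 1 + ∑ j ∈ Finset.range M, (B j).1) =
      x ^ 2 • (1 : Matrix ι ι S) - x • (B M).1 := by
    intro M
    induction M with
    | zero =>
      simp [pow_two, hB0]
      rw [smul_sub, smul_smul]
    | succ M ih =>
      rw [Finset.sum_range_succ, ← add_assoc, mul_add, ih, sub_mul, hB]
      simp
  have hc : Commute A (∑ j ∈ Finset.range N, (B j).1) :=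
    Commute.sum_right _ _ _ fun j _ => hcomm j
  have hc2 : Commute (x • (1 : Matrix ι ι S) - A) (x • 1 + ∑ j ∈ Finset.range N, (B j).1) := by
    have h1 : ∀ M : Matrix ι ι S, Commute (x • (1 : Matrix ι ι S)) M := fun M => by
      rw [Commute, SemiconjBy]; simp
    exact (h1 _).sub_left ((h1 A).symm.add_right hc)
  have hf := tel N
  rw [hBN, smul_zero, sub_zero] at hf
  exact ⟨_, hf, by rw [← hc2.eq]; exact hf⟩

theorem exists_test {S : Type} [CommRing S] (n : Ideal S) (x : S) (xn : x ∈ n)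
    (nzd : ∀ s, x * s = 0 → s = 0) (sq : ∀ v ∈ n, ∀ w ∈ n, ∃ t ∈ n, v * w = x * t)
    {d : ℕ} (v : Fin d → S) (hv : ∀ i, v i ∈ n) (N : ℕ) :
    ∃ (T : ModuleCat.{0} (S ⧸ Ideal.span {x ^ 2})) (e : List (Fin d) → T),
      Module.Finite (S ⧸ Ideal.span {x ^ 2}) T ∧ GDimZero (S ⧸ Ideal.span {x ^ 2}) T ∧
      Ideal.Quotient.mk (Ideal.span {x ^ 2}) x • e [] = 0 ∧
      (∀ i l, (i :: l).length ≤ N → Ideal.Quotient.mk (Ideal.span {x ^ 2}) x • e (i :: l) =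
        Ideal.Quotient.mk (Ideal.span {x ^ 2}) (v i) • e l) ∧
      ∀ (K : Type) (_ : AddCommGroup K) (_ : Module (S ⧸ Ideal.span {x ^ 2}) K) (κ : K),
        (∀ s ∈ n, Ideal.Quotient.mk (Ideal.span {x ^ 2}) s • κ = 0) →
        ∃ g : T →ₗ[S ⧸ Ideal.span {x ^ 2}] K, g (e []) = κ := by
  classical
  let ι := {l : List (Fin d) // l.length ≤ N}
  let _ : Fintype ι := (List.finite_length_le (Fin d) N).fintype
  let A : Matrix ι ι S := Matrix.of fun a b =>
    match b.1 with
    | [] => 0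
    | i :: l => if a.1 = l then v i else 0
  have hA : ∀ a b, A a b ∈ n := by
    rintro a ⟨b, hb⟩
    cases b with
    | nil => exact n.zero_mem
    | cons i l =>
      change (if a.1 = l then v i else 0) ∈ n
      split_ifs
      · exact hv i
      · exact n.zero_mem
  have hs : ∀ a b, A a b ≠ 0 → a.1.length < b.1.length := by
    rintro a ⟨b, hb⟩ hab
    cases b with
    | nil => exact absurd rfl hab
    | cons i l =>
      change (if a.1 = l then v i else 0) ≠ 0 at hab
      have : a.1 = l := by
        by_contra h; rw [if_neg h] at hab; exact hab rfl
      simp [this]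
  obtain ⟨D', h1, h2⟩ := exists_factor n x nzd sq (fun a : ι => a.1.length) N (fun a => a.2) A hA hs
  set D := x • 1 - A with hD
  let f := Ideal.Quotient.mk (Ideal.span {x ^ 2})
  let Q := LinearMap.range (D.map f).mulVecLin
  let q := Q.mkQ
  let E : ι → (ι → S ⧸ Ideal.span {x ^ 2}) := fun a => Pi.single a 1
  let e : List (Fin d) → ((ι → S ⧸ Ideal.span {x ^ 2}) ⧸ Q) := fun l =>
    if h : l.length ≤ N then q (E ⟨l, h⟩) else 0
  have hrel : ∀ b : ι, q (fun a => f (D a b)) = 0 := by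
    intro b
    rw [Submodule.mkQ_apply, Submodule.Quotient.mk_eq_zero]
    refine ⟨E b, ?_⟩
    ext a
    simp [E]
  have hn0 : ([] : List (Fin d)).length ≤ N := Nat.zero_le _
  refine ⟨ModuleCat.of _ ((ι → S ⧸ Ideal.span {x ^ 2}) ⧸ Q), e, ?_, mf_gdim (mf_of x nzd D D' h1 h2),
    ?_, ?_, ?_⟩
  · change Module.Finite _ ((ι → S ⧸ Ideal.span {x ^ 2}) ⧸ Q)
    infer_instance
  · have := hrel ⟨[], hn0⟩
    change f x • e [] = 0
    simp only [e, dif_pos hn0]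
    rw [← map_smul, ← this]
    congr 1
    ext a
    simp [D, A, E, Matrix.one_apply, Pi.single_apply]
    split_ifs <;> simp
  · intro i l hil
    have hl : l.length ≤ N := le_trans (Nat.le_succ _) hil
    have := hrel ⟨i :: l, hil⟩
    change f x • e (i :: l) = f (v i) • e l
    simp only [e, dif_pos hil, dif_pos hl]
    rw [← map_smul, ← map_smul, ← sub_eq_zero, ← map_sub, ← this]
    congr 1
    ext a
    have e1 : (a = ⟨l, hl⟩) ↔ a.1 = l := Subtype.ext_iff
    simp [D, A, E, Matrix.one_apply, Pi.single_apply, e1]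
    split_ifs <;> simp
  · intro K _ _ κ hκ
    let g0 : (ι → S ⧸ Ideal.span {x ^ 2}) →ₗ[S ⧸ Ideal.span {x ^ 2}] K :=
      (LinearMap.toSpanSingleton _ K κ) ∘ₗ LinearMap.proj ⟨[], hn0⟩
    have hg0 : ∀ z, g0 z = z ⟨[], hn0⟩ • κ := fun z => rfl
    refine ⟨Q.liftQ g0 ?_, ?_⟩
    · rintro _ ⟨z, rfl⟩
      rw [LinearMap.mem_ker, hg0, Matrix.mulVecLin_apply, Matrix.mulVec, dotProduct, Finset.sum_smul]
      apply Finset.sum_eq_zero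
      intro b _
      rw [mul_comm, mul_smul, Matrix.map_apply, hκ, smul_zero]
      rw [hD, Matrix.sub_apply, Matrix.smul_apply, smul_eq_mul]
      exact n.sub_mem (n.mul_mem_right _ xn) (hA _ _)
    · change Q.liftQ g0 _ (e []) = κ
      simp only [e, dif_pos hn0]
      change g0 (E _) = κ
      rw [hg0]
      simp [E]



theorem stabilize {R X : Type} [CommRing R] [AddCommGroup X] [Module R X] [IsArtinian R X] {d : ℕ}
    (v : Fin d → R) (y : R) (P : X → Prop)
    (H : ∀ N : ℕ, ∃ e : List (Fin d) → X, P (e []) ∧ y • e [] = 0 ∧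
      ∀ i l, (i :: l).length ≤ N → y • e (i :: l) = v i • e l) :
    ∃ U : Submodule R X, ∃ u ∈ U, P u ∧ y • u = 0 ∧ ∀ z ∈ U, ∀ i, ∃ z' ∈ U, v i • z = y • z' := by
  let nx : Submodule R X → Submodule R X := fun W =>
    { carrier := {t | ∀ i, ∃ z ∈ W, v i • t = y • z}
      add_mem' := by
        intro a b ha hb i
        obtain ⟨z, hz, e⟩ := ha i
        obtain ⟨z', hz', e'⟩ := hb i
        exact ⟨z + z', W.add_mem hz hz', by rw [smul_add, smul_add, e, e']⟩
      zero_mem' := fun i => ⟨0, W.zero_mem, by simp⟩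
      smul_mem' := by
        intro r a ha i
        obtain ⟨z, hz, e⟩ := ha i
        exact ⟨r • z, W.smul_mem _ hz, by rw [smul_comm, e, smul_comm]⟩ }
  have hnx : ∀ W t, t ∈ nx W ↔ ∀ i, ∃ z ∈ W, v i • t = y • z := fun W t => Iff.rfl
  clear_value nx
  let V : ℕ → Submodule R X := fun j => Nat.rec ⊤ (fun _ W => nx W) j
  have hV0 : V 0 = ⊤ := rfl
  have hV : ∀ j, V (j+1) = nx (V j) := fun j => rfl
  clear_value V
  have hanti : ∀ j, V (j+1) ≤ V j := by
    intro j
    induction j with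
    | zero => rw [hV0]; exact le_top
    | succ j ih =>
      intro t ht
      rw [hV, hnx] at ht ⊢
      intro i
      obtain ⟨z, hz, e⟩ := ht i
      exact ⟨z, ih hz, e⟩
  obtain ⟨N, hN⟩ := IsArtinian.monotone_stabilizes (R := R) (M := X)
    ⟨fun j => OrderDual.toDual (V j), monotone_nat_of_le_succ fun j => hanti j⟩
  have hst : V N = V (N+1) := hN (N+1) (Nat.le_succ N)
  obtain ⟨e, hP, h0, hr⟩ := H N
  have hmem : ∀ j l, l.length + j ≤ N → e l ∈ V j := by
    intro j
    induction j with
    | zero => intro l _; rw [hV0]; trivial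
    | succ j ih =>
      intro l hl
      rw [hV, hnx]
      intro i
      refine ⟨e (i :: l), ih _ (by rw [List.length_cons]; omega), (hr i l ?_).symm⟩
      rw [List.length_cons]; omega
  refine ⟨V N, e [], hmem N [] (by simp), hP, h0, ?_⟩
  intro z hz
  rw [hst, hV, hnx] at hz
  exact hz

theorem core {k S : Type} [Field k] [CommRing S] [Algebra k S] {n : Ideal S} {x : S}
    (h : MinMult k S n x) (K : Type) [AddCommGroup K] [Module (S ⧸ Ideal.span {x ^ 2}) K]
    (φ : K ≃ₗ[S ⧸ Ideal.span {x ^ 2}]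
        ((S ⧸ Ideal.span {x ^ 2}) ⧸ Ideal.map (Ideal.Quotient.mk (Ideal.span {x ^ 2})) n)) :
    ¬ ∃ (X : ModuleCat (S ⧸ Ideal.span {x ^ 2}))
          (π : X →ₗ[S ⧸ Ideal.span {x ^ 2}] K),
          Module.Finite (S ⧸ Ideal.span {x ^ 2}) X ∧
          GDimZero (S ⧸ Ideal.span {x ^ 2}) X ∧
          Function.Surjective π ∧
          ∀ (X' : ModuleCat (S ⧸ Ideal.span {x ^ 2})),
            Module.Finite (S ⧸ Ideal.span {x ^ 2}) X' →
            GDimZero (S ⧸ Ideal.span {x ^ 2}) X' →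
            ∀ g : X' →ₗ[S ⧸ Ideal.span {x ^ 2}] K,
              ∃ h : X' →ₗ[S ⧸ Ideal.span {x ^ 2}] X, π ∘ₗ h = g := by
  rintro ⟨X, π, hfin, hG, hπ, hlift⟩
  let f := Ideal.Quotient.mk (Ideal.span {x ^ 2})
  have hS : Setup k S (S ⧸ Ideal.span {x ^ 2}) n x f :=
    { toMinMult := h
      sur := Ideal.Quotient.mk_surjective
      ker := fun s => Ideal.Quotient.eq_zero_iff_dvd _ _
      alg := fun c => rfl }
  have hk := hS.finR
  have hArt : IsArtinianRing (S ⧸ Ideal.span {x ^ 2}) :=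
    isArtinian_of_tower k (inferInstance : IsArtinian k (S ⧸ Ideal.span {x ^ 2}))
  have hKm : ∀ r ∈ n.map f, ∀ κ : K, r • κ = 0 := by
    intro r hr κ
    apply φ.injective
    rw [map_smul, map_zero]
    obtain ⟨q, hq⟩ := Ideal.Quotient.mk_surjective (φ κ)
    rw [← hq]
    change Ideal.Quotient.mk (n.map f) (r * q) = 0
    rw [Ideal.Quotient.eq_zero_iff_mem]
    exact Ideal.mul_mem_right _ _ hr
  obtain ⟨κ, hκ0⟩ : ∃ κ : K, κ ≠ 0 := by
    refine ⟨φ.symm (Ideal.Quotient.mk (n.map f) 1), fun h0 => ?_⟩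
    rw [LinearEquiv.map_eq_zero_iff, Ideal.Quotient.eq_zero_iff_mem, hS.mem] at h0
    obtain ⟨s, hs, hs1⟩ := h0
    obtain ⟨t, ht⟩ := (hS.ker (s - 1)).1 (by rw [map_sub, hs1, map_one, sub_self])
    have : algebraMap k S 1 ∈ n := by
      have e : algebraMap k S 1 = s - x * (x * t) := by rw [map_one]; linear_combination - ht
      rw [e]
      exact n.sub_mem hs (n.mul_mem_right _ h.xn)
    exact one_ne_zero (h.H2 1 this)
  obtain ⟨d, v, hv, hg⟩ := h.gen
  obtain ⟨U, u, huU, hu0, hxu, hU⟩ := stabilize (X := X) (fun i => f (v i)) (f x)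
    (fun t => π t ≠ 0) (by
      intro N
      obtain ⟨T, e, hT1, hT2, he0, he, hK⟩ := exists_test n x h.xn h.nzd h.sq v hv N
      obtain ⟨g, hgκ⟩ := hK K _ _ κ (fun s hs => hKm _ (Ideal.mem_map_of_mem f hs) κ)
      obtain ⟨l, hl⟩ := hlift T hT1 hT2 g
      refine ⟨fun w => l (e w), ?_, ?_, ?_⟩
      · have := LinearMap.congr_fun hl (e [])
        rw [LinearMap.comp_apply, hgκ] at this
        rw [this]; exact hκ0
      · rw [← map_smul]
        exact (congrArg l he0).trans (map_zero l)
      · intro i w hw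
        rw [← map_smul, ← map_smul]
        exact congrArg l (he i w hw))
  refine hS.descent X hG.1 hG.2.2 U u huU ?_ hxu ?_
  · intro z hz s hs
    obtain ⟨c, t, ht, rfl⟩ := hg s hs
    choose z' hz' e using fun i => hU z hz i
    refine ⟨∑ i, f (algebraMap k S (c i)) • z' i + f t • z,
      U.add_mem (U.sum_mem fun i _ => U.smul_mem _ (hz' i)) (U.smul_mem _ hz), ?_⟩
    rw [map_add, add_smul, map_mul, mul_smul, smul_add, map_sum, Finset.sum_smul, Finset.smul_sum]
    congr 1
    refine Finset.sum_congr rfl fun i _ => ?_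
    rw [Algebra.smul_def, map_mul, mul_smul, e, smul_comm]
  · intro hc
    apply hu0
    clear hu0 hxu huU
    induction hc using Submodule.smul_induction_on' with
    | smul r hr t _ => rw [map_smul]; exact hKm r hr _
    | add a _ b _ ha hb =>
      rw [map_add]
      rw [ha, hb, add_zero]

/-- for R = S/x²S with S a non-Gorenstein one-dimensional CM standard
graded algebra with minimal multiplicity and x a degree-one minimal reduction,
the residue field k = R/m has no right G(R)-approximation; in particular the
subcategory of modules of G-dimension zero is not contravariantly finite. -/
theorem stmt_19 (k S : Type) [Field k] [CommRing S] [Algebra k S]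
    (𝒮 : ℕ → Submodule k S) [GradedAlgebra 𝒮] (hSG : IsStandardGraded k S 𝒮)
    (hdim : ringKrullDim S = 1)
    (hng : ¬ HasFiniteSelfInjDim S)
    (x : S) (hx1 : x ∈ 𝒮 1) (hxnzd : x ∈ nonZeroDivisors S)
    (hMM : Ideal.span {x} * (HomogeneousIdeal.irrelevant 𝒮).toIdeal =
      (HomogeneousIdeal.irrelevant 𝒮).toIdeal ^ 2) :
    ∀ K : Type, ∀ (_ : AddCommGroup K) (_ : Module (S ⧸ Ideal.span {x ^ 2}) K),
      ∀ _ : K ≃ₗ[S ⧸ Ideal.span {x ^ 2}]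
        ((S ⧸ Ideal.span {x ^ 2}) ⧸ Ideal.map (Ideal.Quotient.mk (Ideal.span {x ^ 2}))
            (HomogeneousIdeal.irrelevant 𝒮).toIdeal),
      (¬ ∃ (X : ModuleCat (S ⧸ Ideal.span {x ^ 2}))
          (π : X →ₗ[S ⧸ Ideal.span {x ^ 2}] K),
          Module.Finite (S ⧸ Ideal.span {x ^ 2}) X ∧
          GDimZero (S ⧸ Ideal.span {x ^ 2}) X ∧
          Function.Surjective π ∧
          ∀ (X' : ModuleCat (S ⧸ Ideal.span {x ^ 2})),
            Module.Finite (S ⧸ Ideal.span {x ^ 2}) X' →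
            GDimZero (S ⧸ Ideal.span {x ^ 2}) X' →
            ∀ g : X' →ₗ[S ⧸ Ideal.span {x ^ 2}] K,
              ∃ h : X' →ₗ[S ⧸ Ideal.span {x ^ 2}] X, π ∘ₗ h = g) ∧
      ¬ (∀ (M : ModuleCat (S ⧸ Ideal.span {x ^ 2})),
          Module.Finite (S ⧸ Ideal.span {x ^ 2}) M →
          ∃ (X : ModuleCat (S ⧸ Ideal.span {x ^ 2}))
            (π : X →ₗ[S ⧸ Ideal.span {x ^ 2}] M),
            Module.Finite (S ⧸ Ideal.span {x ^ 2}) X ∧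
            GDimZero (S ⧸ Ideal.span {x ^ 2}) X ∧
            Function.Surjective π ∧
            ∀ (X' : ModuleCat (S ⧸ Ideal.span {x ^ 2})),
              Module.Finite (S ⧸ Ideal.span {x ^ 2}) X' →
              GDimZero (S ⧸ Ideal.span {x ^ 2}) X' →
              ∀ g : X' →ₗ[S ⧸ Ideal.span {x ^ 2}] M,
                ∃ h : X' →ₗ[S ⧸ Ideal.span {x ^ 2}] X, π ∘ₗ h = g) := by
  intro K _ _ φ
  have h := minMult_of k S 𝒮 hSG hdim hng x hx1 hxnzd hMM
  refine ⟨core h K φ, fun hcf => ?_⟩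
  have hfin : Module.Finite (S ⧸ Ideal.span {x ^ 2}) K :=
    Module.Finite.of_surjective φ.symm.toLinearMap φ.symm.surjective
  obtain ⟨X, π, hX, hG, hs, hl⟩ := hcf (ModuleCat.of _ (ULift K))
    (Module.Finite.equiv (ULift.moduleEquiv (R := S ⧸ Ideal.span {x ^ 2}) (M := K)).symm)
  let e := ULift.moduleEquiv (R := S ⧸ Ideal.span {x ^ 2}) (M := K)
  refine core h K φ ⟨X, e.toLinearMap ∘ₗ π, hX, hG, e.surjective.comp hs, fun X' h1 h2 g => ?_⟩
  obtain ⟨l, hl'⟩ := hl X' h1 h2 (e.symm.toLinearMap ∘ₗ g)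
  refine ⟨l, LinearMap.ext fun z => ?_⟩
  have hz := congrArg e (LinearMap.congr_fun hl' z)
  exact hz.trans (e.apply_symm_apply (g z))
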